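/- arXiv:1607.08137 — 2 statements merged into one kernel-verified Lean document; each statement's English description precedes it below -/
import Mathlib

section
/- Take k = 3, n = 5 and the weight vectors w¹ = (2,2,1), w² = (2,1,2), w³ = (1,2,2) in the Vandermonde-quotient construction. Then for every δ ≥ 0 the power series F_δ ∈ ℚ[[x₁,x₂,x₃]] is divisible by Δ = (x₁−x₂)(x₁−x₃)(x₂−x₃), and the resulting series I₀(q) = Σ_{δ≥0} a_δ q^δ with a_δ = (F_δ/Δ)(0) satisfies {θ⁴ − q(124θ⁴+242θ³+187θ²+66θ+9) + q²(123θ⁴−246θ³−787θ²−554θ−124) + q³(123θ⁴+738θ³+689θ²+210θ+12) − q⁴(124θ⁴+254θ³+205θ²+78θ+12) + q⁵(θ+1)⁴} I₀ = 0. -/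
noncomputable section
namespace Stmt7

/-- The multivariable power series ring `ℚ[[x₁,x₂,x₃]]`. -/
abbrev R := MvPowerSeries (Fin 3) ℚ

/-- The constant `a` in `R`. -/
def Cc (a : ℚ) : R := MvPowerSeries.C a

/-- The pairs `i < j`. -/
def pairs : Finset (Fin 3 × Fin 3) := Finset.univ.filter fun p => p.1 < p.2

/-- The Vandermonde element `Δ = ∏_{i<j}(x_i − x_j)`. -/
def Vand : R := ∏ p ∈ pairs, (MvPowerSeries.X p.1 - MvPowerSeries.X p.2)

/-- The weight vectors `w¹ = (2,2,1)`, `w² = (2,1,2)`, `w³ = (1,2,2)`. -/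
def ws : List (Fin 3 → ℕ) := [![2, 2, 1], ![2, 1, 2], ![1, 2, 2]]

/-- `n = 5`. -/
def n : ℕ := 5

/-- The term `T_d` of the Vandermonde-quotient construction. -/
def T (d : Fin 3 → ℕ) : R :=
  (∏ p ∈ pairs,
      (MvPowerSeries.X p.1 - MvPowerSeries.X p.2 + Cc ((d p.1 : ℚ) - (d p.2 : ℚ)))) *
    (ws.map fun w =>
      ∏ m ∈ Finset.Icc 1 (∑ j, w j * d j),
        ((∑ j, Cc ((w j : ℚ)) * MvPowerSeries.X j) + Cc (m : ℚ))).prod *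
    (∏ j, ∏ m ∈ Finset.Icc 1 (d j), (MvPowerSeries.X j + Cc (m : ℚ)) ^ n)⁻¹

/-- `F_δ = Σ_{d₁+d₂+d₃=δ} T_d`. -/
def F (δ : ℕ) : R :=
  ∑ d ∈ (Fintype.piFinset fun _ : Fin 3 => Finset.range (δ + 1)).filter
      (fun d => ∑ j, d j = δ), T d

/-- The Euler operator `θ = q·d/dq` on `ℚ[[q]]`. -/
def th (f : PowerSeries ℚ) : PowerSeries ℚ :=
  PowerSeries.mk fun d => (d : ℚ) * PowerSeries.coeff d f

/-! ### Moments of the hypergeometric weight on the discrete simplex -/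

section Moments

variable {Q : Type*} [CommRing Q]

/-- The points `d ∈ ℕ³` with `d₁ + d₂ + d₃ = δ`. -/
def simplexPoints (δ : ℕ) : Finset (Fin 3 → ℕ) :=
  (Fintype.piFinset fun _ : Fin 3 => Finset.range (δ + 1)).filter (fun d => ∑ j, d j = δ)

lemma mem_simplexPoints {δ : ℕ} {d : Fin 3 → ℕ} : d ∈ simplexPoints δ ↔ ∑ j, d j = δ := by
  simp only [simplexPoints, Finset.mem_filter, Fintype.mem_piFinset, Finset.mem_range,
    and_iff_right_iff_imp]
  rintro rfl j
  exact Nat.lt_succ_of_le (Finset.single_le_sum (fun _ _ => Nat.zero_le _) (Finset.mem_univ j))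

lemma le_of_mem_simplexPoints {δ : ℕ} {d : Fin 3 → ℕ} (hd : d ∈ simplexPoints δ) (j : Fin 3) :
    d j ≤ δ := by
  rw [← mem_simplexPoints.1 hd]
  exact Finset.single_le_sum (fun _ _ => Nat.zero_le _) (Finset.mem_univ j)

lemma sum_simplexPoints_succ {M : Type*} [AddCommMonoid M] (δ : ℕ) (i : Fin 3)
    (g : (Fin 3 → ℕ) → M) (hg : ∀ d, d i = 0 → g d = 0) :
    ∑ d ∈ simplexPoints (δ + 1), g d = ∑ d ∈ simplexPoints δ, g (d + Pi.single i 1) := by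
  have hinj : Function.Injective fun d : Fin 3 → ℕ => d + Pi.single i 1 :=
    add_left_injective _
  rw [← Finset.sum_image (s := simplexPoints δ) (f := g) hinj.injOn]
  symm
  apply Finset.sum_subset
  · intro d hd
    obtain ⟨c, hc, rfl⟩ := Finset.mem_image.1 hd
    rw [mem_simplexPoints] at hc ⊢
    simp [Finset.sum_add_distrib, hc]
  · intro d hd hd'
    apply hg
    by_contra h
    have hle : Pi.single i 1 ≤ d := by
      intro j
      rcases eq_or_ne j i with rfl | hj
      · simpa using Nat.one_le_iff_ne_zero.2 h
      · simp [hj]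
    refine hd' (Finset.mem_image.2 ⟨d - Pi.single i 1, ?_, tsub_add_cancel_of_le hle⟩)
    have h1 := mem_simplexPoints.1 hd
    rw [← tsub_add_cancel_of_le hle] at h1
    simp only [Pi.add_apply, Finset.sum_add_distrib, Finset.sum_pi_single', Finset.mem_univ,
      if_true] at h1
    exact mem_simplexPoints.2 (by simpa using h1)

/-- The one-variable factor `∏_{m ≤ N - k} (m - x) · ψ(k)` of the hypergeometric weight. -/
def weightFactor (x : Fin 3 → Q) (ψ : Fin 3 → ℕ → Q) (N : ℕ) (i : Fin 3) (k : ℕ) : Q :=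
  (∏ m ∈ Finset.Icc 1 (N - k), ((m : Q) - x i)) * ψ i k

/-- The sum of `p (d + x)` against the hypergeometric weight over the simplex of size `δ`. -/
def weightedSum (x : Fin 3 → Q) (ψ : Fin 3 → ℕ → Q) (δ : ℕ) (p : (Fin 3 → Q) → Q) : Q :=
  ∑ d ∈ simplexPoints δ, (∏ i, weightFactor x ψ (2 * δ) i (d i)) * p (fun i => d i + x i)

/-- The recursion characterizing `ψ i k = ∏_{m ≤ k} (x i + m)⁻⁵`. -/
def IsQuinticRecursion (x : Fin 3 → Q) (ψ : Fin 3 → ℕ → Q) : Prop :=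
  ∀ i k, ψ i (k + 1) * (x i + (k + 1)) ^ 5 = ψ i k

variable {x : Fin 3 → Q} {ψ : Fin 3 → ℕ → Q}

lemma weightFactor_succ_mul (hψ : IsQuinticRecursion x ψ) {N k : ℕ} (hk : k + 1 ≤ N)
    (i : Fin 3) :
    weightFactor x ψ N i (k + 1) * ((k + x i + 1) ^ 5 * (N - (k + x i))) =
      weightFactor x ψ N i k := by
  obtain ⟨l, rfl⟩ := Nat.exists_eq_add_of_le hk
  have h1 : k + 1 + l - (k + 1) = l := by omega
  have h2 : k + 1 + l - k = l + 1 := by omega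
  rw [weightFactor, weightFactor, h1, h2, Finset.prod_Icc_succ_top (by omega), ← hψ i k]
  push_cast
  ring

lemma weightFactor_add_two {N k : ℕ} (hk : k ≤ N) (i : Fin 3) :
    weightFactor x ψ (N + 2) i k =
      weightFactor x ψ N i k * ((N + 1 - (k + x i)) * (N + 2 - (k + x i))) := by
  obtain ⟨l, rfl⟩ := Nat.exists_eq_add_of_le hk
  have h1 : k + l + 2 - k = l + 1 + 1 := by omega
  have h2 : k + l - k = l := by omega
  rw [weightFactor, weightFactor, h1, h2, Finset.prod_Icc_succ_top (by omega),
    Finset.prod_Icc_succ_top (by omega)]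
  push_cast
  ring

lemma weightedSum_congr {δ : ℕ} (hx : ∑ i, x i = 0) {p p' : (Fin 3 → Q) → Q}
    (h : ∀ z : Fin 3 → Q, ∑ i, z i = δ → p z = p' z) :
    weightedSum x ψ δ p = weightedSum x ψ δ p' := by
  refine Finset.sum_congr rfl fun d hd => ?_
  rw [h]
  rw [Finset.sum_add_distrib, hx, add_zero, ← Nat.cast_sum, mem_simplexPoints.1 hd]

lemma weightedSum_finset_sum {ι : Type*} (s : Finset ι) (δ : ℕ) (p : ι → (Fin 3 → Q) → Q) :
    weightedSum x ψ δ (fun z => ∑ i ∈ s, p i z) = ∑ i ∈ s, weightedSum x ψ δ (p i) := by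
  simp only [weightedSum, Finset.mul_sum]
  exact Finset.sum_comm

lemma weightedSum_shift (hψ : IsQuinticRecursion x ψ) (hx : ∀ i, x i ^ 5 = 0) (δ : ℕ)
    (i : Fin 3) (r : (Fin 3 → Q) → Q) :
    weightedSum x ψ (δ + 1) (fun z =>
        z i ^ 5 * (2 * ((δ + 1 : ℕ) : Q) + 1 - z i) * r (z - Pi.single i 1)) =
      weightedSum x ψ δ (fun z => r z * ∏ j, ((2 * δ + 1 - z j) * (2 * δ + 2 - z j))) := by
  unfold weightedSum
  rw [sum_simplexPoints_succ δ i]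
  · refine Finset.sum_congr rfl fun d hd => ?_
    have hz : (fun j => (((d + Pi.single i 1 : Fin 3 → ℕ) j : ℕ) : Q) + x j) - Pi.single i 1 =
        fun j => d j + x j := by
      ext j
      rcases eq_or_ne j i with rfl | hj
      · simp; ring
      · simp [hj]
    have hgrow : ∏ j, weightFactor x ψ (2 * (δ + 1)) j (d j) =
        (∏ j, weightFactor x ψ (2 * δ) j (d j)) *
          ∏ j, ((2 * δ + 1 - (d j + x j)) * (2 * δ + 2 - (d j + x j))) := by
      rw [← Finset.prod_mul_distrib]
      refine Finset.prod_congr rfl fun j _ => ?_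
      have := le_of_mem_simplexPoints hd j
      rw [mul_add, mul_one, weightFactor_add_two (by omega)]
      push_cast
      ring
    have hstep : (∏ j, weightFactor x ψ (2 * (δ + 1)) j ((d + Pi.single i 1 : Fin 3 → ℕ) j)) *
        ((d i + x i + 1) ^ 5 * (((2 * (δ + 1) : ℕ) : Q) - (d i + x i))) =
        ∏ j, weightFactor x ψ (2 * (δ + 1)) j (d j) := by
      have hle := le_of_mem_simplexPoints hd i
      rw [← Finset.mul_prod_erase _ _ (Finset.mem_univ i),
        ← Finset.mul_prod_erase _ (fun j => weightFactor x ψ (2 * (δ + 1)) j (d j))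
          (Finset.mem_univ i),
        ← weightFactor_succ_mul hψ (show d i + 1 ≤ 2 * (δ + 1) by omega) i,
        Finset.prod_congr rfl (g := fun j => weightFactor x ψ (2 * (δ + 1)) j (d j))]
      · simp only [Pi.add_apply, Pi.single_eq_same]
        ring
      · intro j hj
        simp [Finset.ne_of_mem_erase hj]
    beta_reduce
    rw [hz, mul_left_comm (∏ j, weightFactor x ψ (2 * δ) j (d j)), ← hgrow, ← hstep]
    simp only [Pi.add_apply, Pi.single_eq_same]
    push_cast
    ring
  · intro d hd
    simp [hd, hx]

lemma weightedSum_zero_eq_zero (hx : ∀ i, x i ^ 5 = 0) (i : Fin 3) (r : (Fin 3 → Q) → Q) :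
    weightedSum x ψ 0 (fun z => z i ^ 5 * r z) = 0 := by
  refine Finset.sum_eq_zero fun d hd => ?_
  have : d i = 0 := Nat.le_zero.1 (le_of_mem_simplexPoints hd i)
  simp [this, hx]

/-- The second elementary symmetric function. -/
def esymmTwo (z : Fin 3 → Q) : Q := z 0 * z 1 + z 1 * z 2 + z 2 * z 0

/-- The third elementary symmetric function. -/
def esymmThree (z : Fin 3 → Q) : Q := z 0 * z 1 * z 2

/-- The Vandermonde product `(z₁ - z₂)(z₁ - z₃)(z₂ - z₃)`. -/
def vandermondeProd (z : Fin 3 → Q) : Q := (z 0 - z 1) * (z 0 - z 2) * (z 1 - z 2)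

/-- The monomials used in the certificates. -/
def certMonomial (a e f : Q) : Fin 13 → Q :=
  ![1, f, f ^ 2, e, e * f, e ^ 2, a, f * a, e * a, e * f * a, a ^ 2, f * a ^ 2, e * a ^ 2]

set_option maxHeartbeats 1000000 in
/-- The symmetric quotients of the shifted `certMonomial`s; see `sum_shift_certMonomial`. -/
def shiftedMonomial (D e f : Q) : Fin 13 → Q :=
  ![-e ^ 2 - D ^ 2 * e + D ^ 4 + f - 2 * D * e + D ^ 3,
    -e ^ 2 * f - D ^ 2 * e * f + D ^ 4 * f + 2 * f ^ 2 - 2 * D * e * f + e * f - D ^ 2 * f,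
    -e ^ 2 * f ^ 2 - D ^ 2 * e * f ^ 2 + D ^ 4 * f ^ 2 + 3 * f ^ 3 - 2 * D * e * f ^ 2 -
      D ^ 3 * f ^ 2 + 3 * e * f ^ 2 - D ^ 2 * f ^ 2 + D * f ^ 2,
    -e ^ 3 - D ^ 2 * e ^ 2 + D ^ 4 * e + 3 * e * f - 2 * D * e ^ 2 + D ^ 2 * f + e ^ 2 + D * f -
      D ^ 2 * e,
    -e ^ 3 * f - D ^ 2 * e ^ 2 * f + D ^ 4 * e * f + 4 * e * f ^ 2 - 2 * D * e ^ 2 * f +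
      D ^ 2 * f ^ 2 - D ^ 3 * e * f + 3 * e ^ 2 * f - D ^ 2 * e * f - f ^ 2 + D * e * f,
    -e ^ 4 - D ^ 2 * e ^ 3 + D ^ 4 * e ^ 2 + 5 * e ^ 2 * f - 2 * D * e ^ 3 + 2 * D ^ 2 * e * f -
      D ^ 3 * e ^ 2 - f ^ 2 + 3 * e ^ 3 - D ^ 2 * e ^ 2 - 2 * e * f + D * e ^ 2,
    2 * e * f - D * e ^ 2 + D ^ 2 * f - 2 * D ^ 3 * e + D ^ 5 + 2 * e ^ 2 + 2 * D * f -
      2 * D ^ 2 * e - f + 2 * D * e - D ^ 3,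
    2 * e * f ^ 2 - D * e ^ 2 * f + D ^ 2 * f ^ 2 - 2 * D ^ 3 * e * f + D ^ 5 * f +
      3 * e ^ 2 * f + 2 * D * f ^ 2 - D ^ 2 * e * f - D ^ 4 * f - 3 * f ^ 2 + 4 * D * e * f -
      D ^ 3 * f - e * f + D ^ 2 * f,
    2 * e ^ 2 * f - D * e ^ 3 + D ^ 2 * e * f - 2 * D ^ 3 * e ^ 2 + D ^ 5 * e - f ^ 2 +
      3 * e ^ 3 + 2 * D * e * f - D ^ 2 * e ^ 2 + D ^ 3 * f - D ^ 4 * e - 5 * e * f +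
      4 * D * e ^ 2 - D ^ 3 * e - e ^ 2 - D * f + D ^ 2 * e,
    2 * e ^ 2 * f ^ 2 - D * e ^ 3 * f + D ^ 2 * e * f ^ 2 - 2 * D ^ 3 * e ^ 2 * f +
      D ^ 5 * e * f - f ^ 3 + 4 * e ^ 3 * f + 2 * D * e * f ^ 2 + D ^ 3 * f ^ 2 -
      2 * D ^ 4 * e * f - 9 * e * f ^ 2 + 6 * D * e ^ 2 * f - D ^ 2 * f ^ 2 - 4 * e ^ 2 * f -
      D * f ^ 2 + 2 * D ^ 2 * e * f + f ^ 2 - D * e * f,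
    -f ^ 2 + e ^ 3 + 2 * D * e * f + 2 * D ^ 3 * f - 3 * D ^ 4 * e + D ^ 6 - 6 * e * f +
      5 * D * e ^ 2 + D ^ 2 * f - D ^ 5 - 3 * e ^ 2 - 4 * D * f + 5 * D ^ 2 * e - D ^ 4 + f -
      2 * D * e + D ^ 3,
    -f ^ 3 + e ^ 3 * f + 2 * D * e * f ^ 2 + 2 * D ^ 3 * f ^ 2 - 3 * D ^ 4 * e * f + D ^ 6 * f -
      8 * e * f ^ 2 + 6 * D * e ^ 2 * f + 2 * D ^ 3 * e * f - 2 * D ^ 5 * f - 6 * e ^ 2 * f -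
      6 * D * f ^ 2 + 6 * D ^ 2 * e * f + 4 * f ^ 2 - 6 * D * e * f + 2 * D ^ 3 * f + e * f -
      D ^ 2 * f,
    -e * f ^ 2 + e ^ 4 + 2 * D * e ^ 2 * f + 2 * D ^ 3 * e * f - 3 * D ^ 4 * e ^ 2 + D ^ 6 * e -
      9 * e ^ 2 * f + 6 * D * e ^ 3 - D ^ 2 * e * f + 2 * D ^ 3 * e ^ 2 + D ^ 4 * f -
      2 * D ^ 5 * e + 3 * f ^ 2 - 6 * e ^ 3 - 8 * D * e * f + 6 * D ^ 2 * e ^ 2 - D ^ 3 * f +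
      7 * e * f - 6 * D * e ^ 2 - D ^ 2 * f + 2 * D ^ 3 * e + e ^ 2 + D * f - D ^ 2 * e]

/-- The coefficient of `a ^ 2` in `certMonomial a e f`. -/
def leadMonomial (e f : Q) : Fin 13 → Q :=
  ![0, 0, 0, 0, 0, 0, 0, 0, 0, 0, 1, f, e]

set_option maxHeartbeats 1000000 in
lemma sum_shift_certMonomial (k : Fin 13) {a b c D : Q} (h : a + b + c = D) :
    a ^ 5 * (2 * D + 1 - a) * ((b - c) *
        certMonomial (a - 1) ((a - 1) * b + b * c + c * (a - 1)) ((a - 1) * b * c) k) +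
      b ^ 5 * (2 * D + 1 - b) * ((c - a) *
        certMonomial (b - 1) (a * (b - 1) + (b - 1) * c + c * a) (a * (b - 1) * c) k) +
      c ^ 5 * (2 * D + 1 - c) * ((a - b) *
        certMonomial (c - 1) (a * b + b * (c - 1) + (c - 1) * a) (a * b * (c - 1)) k) =
      (a - b) * (a - c) * (b - c) *
        shiftedMonomial D (a * b + b * c + c * a) (a * b * c) k := by
  subst h
  fin_cases k <;> simp [certMonomial, shiftedMonomial] <;> ring

/-- The antisymmetrized certificate with coefficient vector `c`, in direction `i`. -/
def certNumerator (c : Fin 13 → Q) (i : Fin 3) (z : Fin 3 → Q) : Q :=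
  (z (i + 1) - z (i + 2)) * ∑ k, c k * certMonomial (z i) (esymmTwo z) (esymmThree z) k

lemma sum_shift_certNumerator (c : Fin 13 → Q) {z : Fin 3 → Q} {D : Q} (h : ∑ i, z i = D) :
    ∑ i, z i ^ 5 * (2 * D + 1 - z i) * certNumerator c i (z - Pi.single i 1) =
      vandermondeProd z * ∑ k, c k * shiftedMonomial D (esymmTwo z) (esymmThree z) k := by
  rw [Fin.sum_univ_three] at h
  simp only [certNumerator, Finset.mul_sum]
  rw [Finset.sum_comm]
  refine Finset.sum_congr rfl fun k _ => ?_
  rw [vandermondeProd, esymmTwo, esymmThree, mul_left_comm, ← sum_shift_certMonomial k h,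
    Fin.sum_univ_three]
  simp [esymmTwo, esymmThree]
  ring

lemma sum_certNumerator (c : Fin 13 → Q) (z : Fin 3 → Q) :
    ∑ i, certNumerator c i z =
      vandermondeProd z * ∑ k, c k * leadMonomial (esymmTwo z) (esymmThree z) k := by
  simp only [certNumerator, Finset.mul_sum]
  rw [Finset.sum_comm]
  refine Finset.sum_congr rfl fun k _ => ?_
  rw [Fin.sum_univ_three]
  fin_cases k <;>
    simp [certMonomial, leadMonomial, vandermondeProd, esymmTwo, esymmThree] <;> ring

/-- The sum of `vandermondeProd · p(e₂, e₃)` against the hypergeometric weight. -/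
def moment (x : Fin 3 → Q) (ψ : Fin 3 → ℕ → Q) (δ : ℕ) (p : Q → Q → Q) : Q :=
  weightedSum x ψ δ fun z => vandermondeProd z * p (esymmTwo z) (esymmThree z)

/-- The factor `∏_j (2D - 1 - z_j)(2D - z_j)` in terms of `e₂`, `e₃` when `∑ z_j = D - 1`. -/
def growthFactor (D e f : Q) : Q :=
  ((2 * D - 1) ^ 3 - (2 * D - 1) ^ 2 * (D - 1) + (2 * D - 1) * e - f) *
    ((2 * D) ^ 3 - (2 * D) ^ 2 * (D - 1) + 2 * D * e - f)

lemma moment_shifted_succ (hψ : IsQuinticRecursion x ψ) (hx : ∀ i, x i ^ 5 = 0)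
    (hs : ∑ i, x i = 0) (δ : ℕ) (c : Fin 13 → Q) :
    moment x ψ (δ + 1) (fun e f => ∑ k, c k * shiftedMonomial ((δ : Q) + 1) e f k) =
      moment x ψ δ (fun e f => (∑ k, c k * leadMonomial e f k) *
        growthFactor ((δ : Q) + 1) e f) := by
  have key := Finset.sum_congr rfl fun i (_ : i ∈ Finset.univ) =>
    weightedSum_shift hψ hx δ i (certNumerator c i)
  rw [← weightedSum_finset_sum, ← weightedSum_finset_sum] at key
  refine Eq.trans (weightedSum_congr hs fun z hz => ?_)
    (key.trans (weightedSum_congr hs fun z hz => ?_))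
  · rw [sum_shift_certNumerator c hz, Nat.cast_succ]
  · have hW : ∏ j, ((2 * (δ : Q) + 1 - z j) * (2 * δ + 2 - z j)) =
        growthFactor ((δ : Q) + 1) (esymmTwo z) (esymmThree z) := by
      rw [Fin.sum_univ_three] at hz
      rw [Fin.prod_univ_three, growthFactor, esymmTwo, esymmThree, ← hz]
      ring
    rw [← Finset.sum_mul, sum_certNumerator, hW, mul_assoc]

lemma moment_shifted_eq_zero (hψ : IsQuinticRecursion x ψ) (hx : ∀ i, x i ^ 5 = 0)
    (hs : ∑ i, x i = 0) (δ : ℕ) (c : Fin 13 → Q) (hc : ∀ e f, ∑ k, c k * leadMonomial e f k = 0) :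
    moment x ψ δ (fun e f => ∑ k, c k * shiftedMonomial (δ : Q) e f k) = 0 := by
  cases δ with
  | succ δ =>
    rw [Nat.cast_succ, moment_shifted_succ hψ hx hs]
    simp [hc, moment, weightedSum]
  | zero =>
    have key := Finset.sum_eq_zero fun i (_ : i ∈ Finset.univ) =>
      weightedSum_zero_eq_zero (ψ := ψ) hx i fun z => (2 * ((0 : ℕ) : Q) + 1 - z i) *
        certNumerator c i (z - Pi.single i 1)
    rw [← weightedSum_finset_sum] at key
    rw [← key]
    refine weightedSum_congr hs fun z hz => ?_
    rw [← sum_shift_certNumerator c hz]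
    exact Finset.sum_congr rfl fun i _ => mul_assoc _ _ _

lemma moment_succ_of_certificate (hψ : IsQuinticRecursion x ψ) (hx : ∀ i, x i ^ 5 = 0)
    (hs : ∑ i, x i = 0) (δ : ℕ) {u l : Fin 13 → Q} {κ p₁ p₂ p₃ : Q} {g : Q → Q → Q}
    (hu : ∀ e f, u ⬝ᵥ shiftedMonomial ((δ : Q) + 1) e f = -(κ * g e f))
    (hl : ∀ e f, l ⬝ᵥ leadMonomial e f = 0)
    (h : ∀ e f, u ⬝ᵥ leadMonomial e f * growthFactor ((δ : Q) + 1) e f -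
      l ⬝ᵥ shiftedMonomial (δ : Q) e f = -(p₁ + p₂ * e + p₃ * f)) :
    κ * moment x ψ (δ + 1) g =
      p₁ * moment x ψ δ (fun _ _ => 1) + p₂ * moment x ψ δ (fun e _ => e) +
        p₃ * moment x ψ δ (fun _ f => f) := by
  have hupper : moment x ψ (δ + 1) (fun e f => u ⬝ᵥ shiftedMonomial ((δ : Q) + 1) e f) =
      moment x ψ δ (fun e f => u ⬝ᵥ leadMonomial e f * growthFactor ((δ : Q) + 1) e f) :=
    moment_shifted_succ hψ hx hs δ u
  have hlower : moment x ψ δ (fun e f => l ⬝ᵥ shiftedMonomial (δ : Q) e f) = 0 :=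
    moment_shifted_eq_zero hψ hx hs δ l hl
  have hleft : κ * moment x ψ (δ + 1) g =
      -moment x ψ (δ + 1) (fun e f => u ⬝ᵥ shiftedMonomial ((δ : Q) + 1) e f) := by
    simp only [hu, moment, weightedSum, Finset.mul_sum, ← Finset.sum_neg_distrib]
    exact Finset.sum_congr rfl fun d _ => by ring
  have hright : p₁ * moment x ψ δ (fun _ _ => 1) + p₂ * moment x ψ δ (fun e _ => e) +
      p₃ * moment x ψ δ (fun _ f => f) =
      moment x ψ δ (fun e f => l ⬝ᵥ shiftedMonomial (δ : Q) e f) -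
        moment x ψ δ (fun e f => u ⬝ᵥ leadMonomial e f * growthFactor ((δ : Q) + 1) e f) := by
    simp only [moment, weightedSum, Finset.mul_sum, ← Finset.sum_add_distrib,
      ← Finset.sum_sub_distrib]
    refine Finset.sum_congr rfl fun d _ => ?_
    rw [← mul_sub, ← mul_sub, ← neg_sub, h]
    ring
  rw [hleft, hright]
  linear_combination -hupper - hlower

set_option maxHeartbeats 1000000 in
/-- The upper-level certificate of `moment_unit_succ`. -/
def upperCertUnit (D : Q) : Fin 13 → Q :=
  ![D ^ 2 * (D + 1) ^ 3 * (-2 * D ^ 5 - 8 * D ^ 4 - 4 * D ^ 3 + 4 * D ^ 2 + 6 * D - 4),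
    D * (5 * D ^ 6 + 28 * D ^ 5 + 68 * D ^ 4 + 99 * D ^ 3 + 51 * D ^ 2 + 7 * D - 10),
    -4 * D ^ 4 - 8 * D ^ 3 - 24 * D ^ 2 - 20 * D - 10,
    -6 * D ^ 8 - 22 * D ^ 7 - 51 * D ^ 6 - 50 * D ^ 5 + 15 * D ^ 4 + 15 * D ^ 3 + 20 * D ^ 2 +
      5 * D + 10,
    2 * D ^ 5 - 14 * D ^ 4 - 24 * D ^ 3 - 98 * D ^ 2 - 85 * D - 45,
    -10 * D ^ 5 - 40 * D ^ 4 - 50 * D ^ 3 - 95 * D ^ 2 - 70 * D - 35,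
    6 * D ^ 9 + 24 * D ^ 8 + 63 * D ^ 7 + 57 * D ^ 6 - 25 * D ^ 5 - 8 * D ^ 4 - 31 * D ^ 3 +
      5 * D ^ 2 - 5 * D + 10,
    -D ^ 6 - 3 * D ^ 5 - 25 * D ^ 4 - 20 * D ^ 3 - 72 * D ^ 2 - 60 * D - 35,
    D ^ 7 + 15 * D ^ 6 + 41 * D ^ 5 + 23 * D ^ 4 + 53 * D ^ 3 - 23 * D ^ 2 - 35 * D - 35,
    -2 * D ^ 4 - 4 * D ^ 3 - 12 * D ^ 2 - 10 * D - 5,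
    -5 * D ^ 8 - 20 * D ^ 7 - 55 * D ^ 6 - 70 * D ^ 5 - 16 * D ^ 4 - 7 * D ^ 3 + 14 * D ^ 2 +
      5 * D + 10,
    -10 * D ^ 4 - 20 * D ^ 3 - 60 * D ^ 2 - 50 * D - 25,
    -10 * D ^ 5 - 40 * D ^ 4 - 50 * D ^ 3 - 95 * D ^ 2 - 70 * D - 35]

set_option maxHeartbeats 1000000 in
/-- The lower-level certificate of `moment_unit_succ`. -/
def lowerCertUnit (D : Q) : Fin 13 → Q :=
  ![D * (D + 1) * (-7 * D ^ 8 + 170 * D ^ 7 + 385 * D ^ 6 + 786 * D ^ 5 + 243 * D ^ 4 -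
    74 * D ^ 3 - 489 * D ^ 2 - 280 * D - 160),
    25 * D ^ 7 + 73 * D ^ 6 + 227 * D ^ 5 + 298 * D ^ 4 + 347 * D ^ 3 + 268 * D ^ 2 + 145 * D + 35,
    -4 * D ^ 4 - 8 * D ^ 3 - 24 * D ^ 2 - 20 * D - 10,
    D * (-11 * D ^ 7 + 42 * D ^ 6 + 166 * D ^ 5 + 546 * D ^ 4 + 677 * D ^ 3 + 674 * D ^ 2 +
      350 * D + 130),
    2 * D ^ 5 - 6 * D ^ 4 - 8 * D ^ 3 - 50 * D ^ 2 - 45 * D - 25,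
    0,
    D * (D + 1) * (16 * D ^ 7 + 28 * D ^ 6 + 67 * D ^ 5 - 243 * D ^ 4 - 295 * D ^ 3 -
      347 * D ^ 2 - 160 * D - 80),
    -D ^ 6 + 9 * D ^ 5 + 19 * D ^ 4 + 92 * D ^ 3 + 108 * D ^ 2 + 70 * D + 15,
    D * (11 * D ^ 6 + 42 * D ^ 5 + 142 * D ^ 4 + 142 * D ^ 3 + 171 * D ^ 2 + 100 * D + 50),
    -2 * D ^ 4 - 4 * D ^ 3 - 12 * D ^ 2 - 10 * D - 5,
    0,
    0,
    0]

lemma upperCertUnit_dotProduct (D e f : Q) :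
    upperCertUnit D ⬝ᵥ shiftedMonomial D e f = -(D ^ 7 * (D + 1) ^ 7 * 1) := by
  simp only [upperCertUnit, shiftedMonomial, Matrix.cons_dotProduct_cons,
    Matrix.dotProduct_of_isEmpty]
  ring

lemma lowerCertUnit_dotProduct (D e f : Q) :
    upperCertUnit D ⬝ᵥ leadMonomial e f * growthFactor D e f -
      lowerCertUnit D ⬝ᵥ shiftedMonomial (D - 1) e f =
      -(D ^ 4 * (D + 1) ^ 7 * (89 * D ^ 3 - 155 * D ^ 2 + 100 * D - 25) +
        D ^ 3 * (D + 1) ^ 7 * (55 * D ^ 2 - 50 * D + 25) * e +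
        D ^ 3 * (D + 1) ^ 7 * 25 * f) := by
  simp only [upperCertUnit, lowerCertUnit, shiftedMonomial, leadMonomial, growthFactor,
    Matrix.cons_dotProduct_cons, Matrix.dotProduct_of_isEmpty]
  ring

lemma moment_unit_succ (hψ : IsQuinticRecursion x ψ) (hx : ∀ i, x i ^ 5 = 0)
    (hs : ∑ i, x i = 0) (δ : ℕ) {D : Q} (hD : D = δ + 1) :
    D ^ 7 * (D + 1) ^ 7 * moment x ψ (δ + 1) (fun _ _ => 1) =
      D ^ 4 * (D + 1) ^ 7 * (89 * D ^ 3 - 155 * D ^ 2 + 100 * D - 25) *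
          moment x ψ δ (fun _ _ => 1) +
        D ^ 3 * (D + 1) ^ 7 * (55 * D ^ 2 - 50 * D + 25) * moment x ψ δ (fun e _ => e) +
        D ^ 3 * (D + 1) ^ 7 * 25 * moment x ψ δ (fun _ f => f) := by
  subst hD
  refine moment_succ_of_certificate hψ hx hs δ (l := lowerCertUnit ((δ : Q) + 1))
    (fun e f => upperCertUnit_dotProduct _ e f) (fun e f => ?_) (fun e f => ?_)
  · simp [lowerCertUnit, leadMonomial]
  · simpa using lowerCertUnit_dotProduct ((δ : Q) + 1) e f

set_option maxHeartbeats 1000000 in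
/-- The upper-level certificate of `moment_quadratic_succ`. -/
def upperCertQuadratic (D : Q) : Fin 13 → Q :=
  ![D ^ 2 * (D + 1) ^ 3 * (-D ^ 4 - D ^ 3 - D ^ 2 + 5 * D - 2),
    D * (D ^ 5 + 12 * D ^ 4 + 35 * D ^ 3 + 20 * D ^ 2 + 10 * D - 6),
    2 * D ^ 3 - 8 * D ^ 2 - 6 * D - 6,
    -17 * D ^ 6 - 26 * D ^ 5 + D ^ 4 - 7 * D ^ 3 + 14 * D ^ 2 - 3 * D + 6,
    -D ^ 4 + 13 * D ^ 3 - 33 * D ^ 2 - 24 * D - 27,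
    -5 * D ^ 5 - 10 * D ^ 4 - 35 * D ^ 2 - 21 * D - 21,
    D ^ 8 + 21 * D ^ 7 + 22 * D ^ 6 - 7 * D ^ 5 + 15 * D ^ 4 - 29 * D ^ 3 + 12 * D ^ 2 - 9 * D + 6,
    -2 * D ^ 5 - 9 * D ^ 4 + 10 * D ^ 3 - 27 * D ^ 2 - 15 * D - 21,
    5 * D ^ 6 + 6 * D ^ 5 - 7 * D ^ 4 + 38 * D ^ 3 - 13 * D ^ 2 - 21,
    D ^ 3 - 4 * D ^ 2 - 3 * D - 3,
    -16 * D ^ 6 - 26 * D ^ 5 - 5 * D ^ 4 - 15 * D ^ 3 + 11 * D ^ 2 - 3 * D + 6,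
    5 * D ^ 3 - 20 * D ^ 2 - 15 * D - 15,
    -5 * D ^ 5 - 10 * D ^ 4 - 35 * D ^ 2 - 21 * D - 21]

set_option maxHeartbeats 1000000 in
/-- The lower-level certificate of `moment_quadratic_succ`. -/
def lowerCertQuadratic (D : Q) : Fin 13 → Q :=
  ![D * (D + 1) * (44 * D ^ 7 + 44 * D ^ 6 + 305 * D ^ 5 + 67 * D ^ 4 + 153 * D ^ 3 -
    215 * D ^ 2 - 72 * D - 96),
    -9 * D ^ 6 + 47 * D ^ 5 + 53 * D ^ 4 + 115 * D ^ 3 + 93 * D ^ 2 + 66 * D + 21,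
    2 * D ^ 3 - 8 * D ^ 2 - 6 * D - 6,
    D * (15 * D ^ 6 + 5 * D ^ 5 + 139 * D ^ 4 + 153 * D ^ 3 + 268 * D ^ 2 + 132 * D + 78),
    -D ^ 4 + 9 * D ^ 3 - 17 * D ^ 2 - 12 * D - 15,
    0,
    D * (D + 1) * (11 * D ^ 6 + 68 * D ^ 5 - 84 * D ^ 4 - 28 * D ^ 3 - 157 * D ^ 2 - 48 * D - 48),
    -2 * D ^ 5 - 15 * D ^ 4 + 24 * D ^ 3 + 31 * D ^ 2 + 33 * D + 9,
    D * (5 * D ^ 5 + 45 * D ^ 4 + 21 * D ^ 3 + 71 * D ^ 2 + 30 * D + 30),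
    D ^ 3 - 4 * D ^ 2 - 3 * D - 3,
    0,
    0,
    0]

lemma upperCertQuadratic_dotProduct (D e f : Q) :
    upperCertQuadratic D ⬝ᵥ shiftedMonomial D e f = -(D ^ 5 * (D + 1) ^ 6 * e) := by
  simp only [upperCertQuadratic, shiftedMonomial, Matrix.cons_dotProduct_cons,
    Matrix.dotProduct_of_isEmpty]
  ring

lemma lowerCertQuadratic_dotProduct (D e f : Q) :
    upperCertQuadratic D ⬝ᵥ leadMonomial e f * growthFactor D e f -
      lowerCertQuadratic D ⬝ᵥ shiftedMonomial (D - 1) e f =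
      -(D ^ 4 * (D + 1) ^ 6 * (55 * D ^ 3 - 94 * D ^ 2 + 60 * D - 15) +
        D ^ 3 * (D + 1) ^ 6 * (34 * D ^ 2 - 30 * D + 15) * e +
        D ^ 3 * (D + 1) ^ 6 * 15 * f) := by
  simp only [upperCertQuadratic, lowerCertQuadratic, shiftedMonomial, leadMonomial, growthFactor,
    Matrix.cons_dotProduct_cons, Matrix.dotProduct_of_isEmpty]
  ring

lemma moment_quadratic_succ (hψ : IsQuinticRecursion x ψ) (hx : ∀ i, x i ^ 5 = 0)
    (hs : ∑ i, x i = 0) (δ : ℕ) {D : Q} (hD : D = δ + 1) :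
    D ^ 5 * (D + 1) ^ 6 * moment x ψ (δ + 1) (fun e _ => e) =
      D ^ 4 * (D + 1) ^ 6 * (55 * D ^ 3 - 94 * D ^ 2 + 60 * D - 15) *
          moment x ψ δ (fun _ _ => 1) +
        D ^ 3 * (D + 1) ^ 6 * (34 * D ^ 2 - 30 * D + 15) * moment x ψ δ (fun e _ => e) +
        D ^ 3 * (D + 1) ^ 6 * 15 * moment x ψ δ (fun _ f => f) := by
  subst hD
  refine moment_succ_of_certificate hψ hx hs δ (l := lowerCertQuadratic ((δ : Q) + 1))
    (fun e f => upperCertQuadratic_dotProduct _ e f) (fun e f => ?_) (fun e f => ?_)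
  · simp [lowerCertQuadratic, leadMonomial]
  · simpa using lowerCertQuadratic_dotProduct ((δ : Q) + 1) e f

set_option maxHeartbeats 1000000 in
/-- The upper-level certificate of `moment_cubic_succ`. -/
def upperCertCubic (D : Q) : Fin 13 → Q :=
  ![0,
    D * (D ^ 4 + 3 * D ^ 3 + D ^ 2 + 5 * D - 2),
    -2 * D ^ 2 - 2,
    -2 * D ^ 6 - 3 * D ^ 5 - 6 * D ^ 4 - 10 * D ^ 3 + 6 * D ^ 2 - 3 * D + 2,
    D ^ 3 - 9 * D ^ 2 + D - 9,
    D ^ 4 - 10 * D ^ 2 - 7,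
    2 * D ^ 7 + D ^ 6 + 3 * D ^ 5 + 4 * D ^ 4 - 16 * D ^ 3 + 9 * D ^ 2 - 5 * D + 2,
    2 * D ^ 3 - 9 * D ^ 2 + 2 * D - 7,
    -D ^ 5 + D ^ 4 + 10 * D ^ 3 - 10 * D ^ 2 + 7 * D - 7,
    -D ^ 2 - 1,
    -2 * D ^ 6 - 3 * D ^ 5 - 6 * D ^ 4 - 10 * D ^ 3 + 6 * D ^ 2 - 3 * D + 2,
    -5 * D ^ 2 - 5,
    D ^ 4 - 10 * D ^ 2 - 7]

set_option maxHeartbeats 1000000 in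
/-- The lower-level certificate of `moment_cubic_succ`. -/
def lowerCertCubic (D : Q) : Fin 13 → Q :=
  ![D * (D + 1) * (-11 * D ^ 6 + 49 * D ^ 5 + 10 * D ^ 4 + 93 * D ^ 3 - 69 * D ^ 2 + 8 * D - 32),
    11 * D ^ 5 + 6 * D ^ 4 + 28 * D ^ 3 + 13 * D ^ 2 + 15 * D + 7,
    -2 * D ^ 2 - 2,
    D * (-7 * D ^ 5 + 16 * D ^ 4 + 11 * D ^ 3 + 64 * D ^ 2 + 18 * D + 26),
    D ^ 3 - 5 * D ^ 2 + D - 5,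
    0,
    D * (D + 1) * (4 * D ^ 5 - 15 * D ^ 4 + 26 * D ^ 3 - 47 * D ^ 2 - 16),
    8 * D ^ 3 + D ^ 2 + 8 * D + 3,
    D * (3 * D ^ 4 - 2 * D ^ 3 + 21 * D ^ 2 + 10),
    -D ^ 2 - 1,
    0,
    0,
    0]

lemma upperCertCubic_dotProduct (D e f : Q) :
    upperCertCubic D ⬝ᵥ shiftedMonomial D e f = -(D ^ 4 * (D + 1) ^ 5 * f) := by
  simp only [upperCertCubic, shiftedMonomial, Matrix.cons_dotProduct_cons,
    Matrix.dotProduct_of_isEmpty]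
  ring

lemma lowerCertCubic_dotProduct (D e f : Q) :
    upperCertCubic D ⬝ᵥ leadMonomial e f * growthFactor D e f -
      lowerCertCubic D ⬝ᵥ shiftedMonomial (D - 1) e f =
      -(D ^ 4 * (D + 1) ^ 5 * (25 * D ^ 3 - 37 * D ^ 2 + 21 * D - 5) +
        D ^ 3 * (D + 1) ^ 5 * (15 * D ^ 2 - 11 * D + 5) * e +
        D ^ 3 * (D + 1) ^ 5 * (-D + 5) * f) := by
  simp only [upperCertCubic, lowerCertCubic, shiftedMonomial, leadMonomial, growthFactor,
    Matrix.cons_dotProduct_cons, Matrix.dotProduct_of_isEmpty]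
  ring

lemma moment_cubic_succ (hψ : IsQuinticRecursion x ψ) (hx : ∀ i, x i ^ 5 = 0)
    (hs : ∑ i, x i = 0) (δ : ℕ) {D : Q} (hD : D = δ + 1) :
    D ^ 4 * (D + 1) ^ 5 * moment x ψ (δ + 1) (fun _ f => f) =
      D ^ 4 * (D + 1) ^ 5 * (25 * D ^ 3 - 37 * D ^ 2 + 21 * D - 5) *
          moment x ψ δ (fun _ _ => 1) +
        D ^ 3 * (D + 1) ^ 5 * (15 * D ^ 2 - 11 * D + 5) * moment x ψ δ (fun e _ => e) +
        D ^ 3 * (D + 1) ^ 5 * (-D + 5) * moment x ψ δ (fun _ f => f) := by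
  subst hD
  refine moment_succ_of_certificate hψ hx hs δ (l := lowerCertCubic ((δ : Q) + 1))
    (fun e f => upperCertCubic_dotProduct _ e f) (fun e f => ?_) (fun e f => ?_)
  · simp [lowerCertCubic, leadMonomial]
  · simpa using lowerCertCubic_dotProduct ((δ : Q) + 1) e f

end Moments
/-! ### Apéry numbers and the evaluation of the moments -/

/-- The Apéry numbers `1, 3, 19, 147, …` of the recursion for `ζ2`. -/
def apery : ℕ → ℚ
  | 0 => 1
  | 1 => 3
  | k + 2 => ((11 * (k + 1) ^ 2 + 11 * (k + 1) + 3) * apery (k + 1) + (k + 1) ^ 2 * apery k) /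
      (k + 2) ^ 2

lemma apery_add_two (k : ℕ) :
    apery (k + 2) = ((11 * (k + 1) ^ 2 + 11 * (k + 1) + 3) * apery (k + 1) +
      (k + 1) ^ 2 * apery k) / (k + 2) ^ 2 := by
  rw [apery]

/-- The value of the `e₂`-moment in terms of consecutive Apéry numbers. -/
def quadraticMoment (k : ℕ) : ℚ :=
  ((k + 1) ^ 2 * (apery k * apery (k + 1)) - (8 * k ^ 2 + 11 * k + 3) * apery k ^ 2) / 5

/-- The value of the `e₃`-moment in terms of consecutive Apéry numbers. -/
def cubicMoment (k : ℕ) : ℚ :=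
  ((9 + 36 * k + 44 * k ^ 2 + 16 * k ^ 3 - k ^ 4) * apery k ^ 2 -
    (k + 1) ^ 2 * (11 * k ^ 2 + 12 * k + 6) * (apery k * apery (k + 1)) +
    (k + 1) ^ 4 * apery (k + 1) ^ 2) / 25

lemma apery_sq_succ (k : ℕ) {D : ℚ} (hD : D = k + 1) :
    D ^ 7 * (D + 1) ^ 7 * apery (k + 1) ^ 2 =
      D ^ 4 * (D + 1) ^ 7 * (89 * D ^ 3 - 155 * D ^ 2 + 100 * D - 25) * apery k ^ 2 +
        D ^ 3 * (D + 1) ^ 7 * (55 * D ^ 2 - 50 * D + 25) * quadraticMoment k +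
        D ^ 3 * (D + 1) ^ 7 * 25 * cubicMoment k := by
  rw [quadraticMoment, cubicMoment, hD]
  ring

lemma quadraticMoment_succ (k : ℕ) {D : ℚ} (hD : D = k + 1) :
    D ^ 5 * (D + 1) ^ 6 * quadraticMoment (k + 1) =
      D ^ 4 * (D + 1) ^ 6 * (55 * D ^ 3 - 94 * D ^ 2 + 60 * D - 15) * apery k ^ 2 +
        D ^ 3 * (D + 1) ^ 6 * (34 * D ^ 2 - 30 * D + 15) * quadraticMoment k +
        D ^ 3 * (D + 1) ^ 6 * 15 * cubicMoment k := by
  have hpos : (k : ℚ) + 2 ≠ 0 := by positivity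
  rw [quadraticMoment, quadraticMoment, cubicMoment, apery_add_two, hD]
  push_cast
  field_simp
  ring

lemma cubicMoment_succ (k : ℕ) {D : ℚ} (hD : D = k + 1) :
    D ^ 4 * (D + 1) ^ 5 * cubicMoment (k + 1) =
      D ^ 4 * (D + 1) ^ 5 * (25 * D ^ 3 - 37 * D ^ 2 + 21 * D - 5) * apery k ^ 2 +
        D ^ 3 * (D + 1) ^ 5 * (15 * D ^ 2 - 11 * D + 5) * quadraticMoment k +
        D ^ 3 * (D + 1) ^ 5 * (-D + 5) * cubicMoment k := by
  have hpos : (k : ℚ) + 2 ≠ 0 := by positivity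
  rw [cubicMoment, cubicMoment, quadraticMoment, apery_add_two, hD]
  push_cast
  field_simp
  ring

section Evaluation

variable {Q : Type*} [CommRing Q] {x : Fin 3 → Q} {ψ : Fin 3 → ℕ → Q}

lemma moment_zero (h0 : ∀ i, ψ i 0 = 1) (p : Q → Q → Q) :
    moment x ψ 0 p = vandermondeProd x * p (esymmTwo x) (esymmThree x) := by
  have hpts : simplexPoints 0 = {0} := by
    ext d
    simp [mem_simplexPoints, funext_iff]
  simp [moment, weightedSum, hpts, weightFactor, h0]

variable [Algebra ℚ Q]

lemma eq_algebraMap_mul_of_mul_eq {c r p₁ p₂ p₃ a₁ a₂ a₃ : ℚ} {m m₁ m₂ m₃ v : Q}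
    (hc : c ≠ 0) (hr : c * r = p₁ * a₁ + p₂ * a₂ + p₃ * a₃)
    (h₁ : m₁ = algebraMap ℚ Q a₁ * v) (h₂ : m₂ = algebraMap ℚ Q a₂ * v)
    (h₃ : m₃ = algebraMap ℚ Q a₃ * v)
    (h : algebraMap ℚ Q c * m =
      algebraMap ℚ Q p₁ * m₁ + algebraMap ℚ Q p₂ * m₂ + algebraMap ℚ Q p₃ * m₃) :
    m = algebraMap ℚ Q r * v := by
  have hu : IsUnit (algebraMap ℚ Q c) := (IsUnit.mk0 c hc).map _
  have hr' := congrArg (algebraMap ℚ Q) hr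
  simp only [map_mul, map_add] at hr'
  apply hu.mul_left_cancel
  rw [h, h₁, h₂, h₃]
  linear_combination -v * hr'

lemma moment_eq_apery (hψ : IsQuinticRecursion x ψ) (h0 : ∀ i, ψ i 0 = 1)
    (hx : ∀ i, x i ^ 5 = 0) (hs : ∑ i, x i = 0) (hv : ∀ i, vandermondeProd x * x i = 0)
    (δ : ℕ) :
    moment x ψ δ (fun _ _ => 1) = algebraMap ℚ Q (apery δ ^ 2) * vandermondeProd x ∧
      moment x ψ δ (fun e _ => e) = algebraMap ℚ Q (quadraticMoment δ) * vandermondeProd x ∧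
      moment x ψ δ (fun _ f => f) = algebraMap ℚ Q (cubicMoment δ) * vandermondeProd x := by
  induction δ with
  | zero =>
    have h₂ : quadraticMoment 0 = 0 := by norm_num [quadraticMoment, apery]
    have h₃ : cubicMoment 0 = 0 := by norm_num [cubicMoment, apery]
    simp only [moment_zero h0, esymmTwo, esymmThree, h₂, h₃, map_zero]
    refine ⟨by simp [apery], ?_, ?_⟩
    · linear_combination (x 1 + x 2) * hv 0 + x 2 * hv 1
    · linear_combination x 1 * x 2 * hv 0
  | succ δ ih =>
    obtain ⟨h₁, h₂, h₃⟩ := ih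
    refine ⟨eq_algebraMap_mul_of_mul_eq ?_ (apery_sq_succ δ rfl) h₁ h₂ h₃ ?_,
      eq_algebraMap_mul_of_mul_eq ?_ (quadraticMoment_succ δ rfl) h₁ h₂ h₃ ?_,
      eq_algebraMap_mul_of_mul_eq ?_ (cubicMoment_succ δ rfl) h₁ h₂ h₃ ?_⟩
    · positivity
    · simpa [map_ofNat (algebraMap ℚ Q)] using moment_unit_succ hψ hx hs δ rfl
    · positivity
    · simpa [map_ofNat (algebraMap ℚ Q)] using moment_quadratic_succ hψ hx hs δ rfl
    · positivity
    · simpa [map_ofNat (algebraMap ℚ Q)] using moment_cubic_succ hψ hx hs δ rfl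

end Evaluation

/-! ### Images of the hypergeometric terms under algebra homomorphisms -/

section Images

variable {Q : Type*} [CommRing Q] [Algebra ℚ Q] (φ : R →ₐ[ℚ] Q)

/-- The denominator `∏_{m ≤ k} (x_i + m)⁵`. -/
def quinticProd (i : Fin 3) (k : ℕ) : R :=
  ∏ m ∈ Finset.Icc 1 k, (MvPowerSeries.X i + Cc (m : ℚ)) ^ n

/-- The image under `φ` of the inverse of `quinticProd i k`. -/
def quinticInv (i : Fin 3) (k : ℕ) : Q := φ (quinticProd i k)⁻¹

lemma map_Cc (a : ℚ) : φ (Cc a) = algebraMap ℚ Q a := φ.commutes a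

lemma constantCoeff_quinticProd_ne_zero (i : Fin 3) (k : ℕ) :
    MvPowerSeries.constantCoeff (quinticProd i k) ≠ 0 := by
  rw [quinticProd, map_prod, Finset.prod_ne_zero_iff]
  intro m hm
  have : m ≠ 0 := by have := Finset.mem_Icc.1 hm; omega
  simpa [Cc, n] using this

lemma map_quinticProd_mul_quinticInv (i : Fin 3) (k : ℕ) :
    φ (quinticProd i k) * quinticInv φ i k = 1 := by
  rw [quinticInv, ← map_mul,
    MvPowerSeries.mul_inv_cancel _ (constantCoeff_quinticProd_ne_zero i k), map_one]

lemma map_quinticProd (i : Fin 3) (k : ℕ) :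
    φ (quinticProd i k) = ∏ m ∈ Finset.Icc 1 k, (φ (MvPowerSeries.X i) + (m : Q)) ^ 5 := by
  simp [quinticProd, map_Cc, n]

lemma quinticInv_zero (i : Fin 3) : quinticInv φ i 0 = 1 := by
  simpa [map_quinticProd] using map_quinticProd_mul_quinticInv φ i 0

lemma isQuinticRecursion_quinticInv :
    IsQuinticRecursion (fun i => φ (MvPowerSeries.X i)) (quinticInv φ) := by
  intro i k
  have h := map_quinticProd_mul_quinticInv φ i (k + 1)
  rw [map_quinticProd, Finset.prod_Icc_succ_top (by omega), ← map_quinticProd] at h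
  push_cast at h
  linear_combination quinticInv φ i k * h - quinticInv φ i (k + 1) *
    (φ (MvPowerSeries.X i) + (k + 1)) ^ 5 * map_quinticProd_mul_quinticInv φ i k

lemma quinticInv_congr {i j : Fin 3} (h : φ (MvPowerSeries.X i) = φ (MvPowerSeries.X j)) :
    quinticInv φ i = quinticInv φ j := by
  ext k
  have hi := map_quinticProd_mul_quinticInv φ i k
  rw [map_quinticProd, h, ← map_quinticProd, mul_comm] at hi
  exact left_inv_eq_right_inv hi (map_quinticProd_mul_quinticInv φ j k)

lemma pairs_eq : pairs = {(0, 1), (0, 2), (1, 2)} := by decide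

lemma Vand_eq : Vand = vandermondeProd (MvPowerSeries.X : Fin 3 → R) := by
  simp [Vand, pairs_eq, vandermondeProd, mul_assoc]

lemma map_vandermondeProd (z : Fin 3 → R) :
    φ (vandermondeProd z) = vandermondeProd (fun i => φ (z i)) := by
  simp [vandermondeProd]

lemma map_T (d : Fin 3 → ℕ) :
    φ (T d) = vandermondeProd (fun i => (d i : Q) + φ (MvPowerSeries.X i)) *
      ∏ i, ((∏ m ∈ Finset.Icc 1 (2 * ∑ j, d j - d i),
        ((m : Q) + (2 * ∑ j, φ (MvPowerSeries.X j) - φ (MvPowerSeries.X i)))) *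
        quinticInv φ i (d i)) := by
  have hden : φ (∏ j, ∏ m ∈ Finset.Icc 1 (d j), (MvPowerSeries.X j + Cc (m : ℚ)) ^ n)⁻¹ =
      ∏ i, quinticInv φ i (d i) := by
    simp only [Fin.prod_univ_three, MvPowerSeries.mul_inv_rev, map_mul, quinticInv, quinticProd]
    ring
  have hvand : φ (∏ p ∈ pairs, (MvPowerSeries.X p.1 - MvPowerSeries.X p.2 +
      Cc ((d p.1 : ℚ) - (d p.2 : ℚ)))) =
      vandermondeProd (fun i => (d i : Q) + φ (MvPowerSeries.X i)) := by
    simp [pairs_eq, map_Cc, vandermondeProd]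
    ring
  have hnum : φ (ws.map fun w => ∏ m ∈ Finset.Icc 1 (∑ j, w j * d j),
      ((∑ j, Cc ((w j : ℚ)) * MvPowerSeries.X j) + Cc (m : ℚ))).prod =
      ∏ i, ∏ m ∈ Finset.Icc 1 (2 * ∑ j, d j - d i),
        ((m : Q) + (2 * ∑ j, φ (MvPowerSeries.X j) - φ (MvPowerSeries.X i))) := by
    have hcount : ∀ i, 2 * ∑ j, d j - d i = ∑ j, (if j = i then 1 else 2) * d j := by
      intro i
      fin_cases i <;> simp [Fin.sum_univ_three] <;> omega
    have hlin : ∀ i, 2 * ∑ j, φ (MvPowerSeries.X j) - φ (MvPowerSeries.X i) =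
        φ (∑ j, Cc (((if j = i then 1 else 2 : ℕ) : ℚ)) * MvPowerSeries.X j) := by
      intro i
      fin_cases i <;> simp [Fin.sum_univ_three, map_Cc, map_ofNat (algebraMap ℚ Q)] <;> ring
    have hws : ws = [fun j => if j = 2 then 1 else 2, fun j => if j = 1 then 1 else 2,
        fun j => if j = 0 then 1 else 2] := by
      decide
    simp only [hcount, hlin, hws, List.map_cons, List.map_nil, List.prod_cons, List.prod_nil,
      Fin.prod_univ_three, map_mul, map_prod, map_add, map_Cc, map_natCast, mul_one]
    simp only [add_comm (Nat.cast _ : Q)]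
    ring
  rw [T, map_mul, map_mul, hden, hvand, hnum, Finset.prod_mul_distrib, mul_assoc]

end Images

/-! ### Divisibility by the Vandermonde element -/

section Divisibility

open MvPowerSeries

variable {σ A : Type*} [Finite σ] [DecidableEq σ] [CommRing A]

lemma hasSubst_update_X (i : σ) {a : MvPowerSeries σ A} (ha : constantCoeff a = 0) :
    HasSubst (Function.update (X : σ → MvPowerSeries σ A) i a) := by
  refine hasSubst_of_constantCoeff_zero fun s => ?_
  rcases eq_or_ne s i with rfl | hs
  · simpa using ha
  · simp [hs]

lemma X_dvd_of_subst_update_zero_eq_zero {i : σ} {f : MvPowerSeries σ A}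
    (hf : subst (Function.update (X : σ → MvPowerSeries σ A) i 0) f = 0) : X i ∣ f := by
  rw [X_dvd_iff]
  intro m hm
  have hX := hasSubst_update_X (A := A) i (map_zero constantCoeff)
  have h := congrArg (coeff m) hf
  rw [coeff_subst hX, map_zero, finsum_eq_single _ m] at h
  · have hprod : (m.prod fun s e => Function.update (X : σ → MvPowerSeries σ A) i 0 s ^ e) =
        monomial m 1 := by
      rw [monomial_one_eq]
      refine Finsupp.prod_congr fun s hs => ?_
      have hsi : s ≠ i := fun h => Finsupp.mem_support_iff.1 hs (h ▸ hm)
      simp [hsi]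
    simpa [hprod] using h
  · intro d hd
    by_cases hdi : d i = 0
    · have hprod : (d.prod fun s e => Function.update (X : σ → MvPowerSeries σ A) i 0 s ^ e) =
          monomial d 1 := by
        rw [monomial_one_eq]
        refine Finsupp.prod_congr fun s hs => ?_
        have hsi : s ≠ i := fun h => Finsupp.mem_support_iff.1 hs (h ▸ hdi)
        simp [hsi]
      simp [hprod, coeff_monomial, hd.symm]
    · have hprod : (d.prod fun s e => Function.update (X : σ → MvPowerSeries σ A) i 0 s ^ e) =
          0 := by
        refine Finset.prod_eq_zero (Finsupp.mem_support_iff.2 hdi) ?_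
        simp [hdi]
      simp [hprod]

lemma X_sub_X_dvd_of_subst_eq_zero {i j : σ} (hij : i ≠ j) {f : MvPowerSeries σ A}
    (hf : subst (Function.update (X : σ → MvPowerSeries σ A) i (X j)) f = 0) :
    X i - X j ∣ f := by
  have hadd := hasSubst_update_X (A := A) (a := X i + X j) i (by simp)
  have hsub := hasSubst_update_X (A := A) (a := X i - X j) i (by simp)
  have hzero := hasSubst_update_X (A := A) i (map_zero constantCoeff)
  obtain ⟨g, hg⟩ : X i ∣ subst (Function.update X i (X i + X j : MvPowerSeries σ A)) f := by
    apply X_dvd_of_subst_update_zero_eq_zero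
    rw [subst_comp_subst_apply hadd hzero]
    refine Eq.trans ?_ hf
    congr 1
    ext1 s
    rcases eq_or_ne s i with rfl | hs
    · simp [subst_add hzero, subst_X hzero, hij.symm]
    · simp [hs, subst_X hzero]
  have h := congrArg (subst (Function.update (X : σ → MvPowerSeries σ A) i (X i - X j))) hg
  rw [subst_comp_subst_apply hadd hsub, subst_mul hsub, subst_X hsub,
    Function.update_self] at h
  have hid : (fun s => subst (Function.update (X : σ → MvPowerSeries σ A) i (X i - X j))
      (Function.update (X : σ → MvPowerSeries σ A) i (X i + X j) s)) = X := by
    ext1 s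
    rcases eq_or_ne s i with rfl | hs
    · simp [subst_add hsub, subst_X hsub, hij.symm]
    · simp [hs, subst_X hsub]
  rw [hid, subst_self, id] at h
  exact ⟨_, h⟩

lemma vandermondeProd_comp_swap {Q : Type*} [CommRing Q] (z : Fin 3 → Q) {i j : Fin 3}
    (hij : i ≠ j) : vandermondeProd (z ∘ Equiv.swap i j) = -vandermondeProd z := by
  fin_cases i <;> fin_cases j <;>
    simp_all [vandermondeProd, Equiv.swap_apply_def] <;> ring

lemma map_F_eq_zero {Q : Type*} [CommRing Q] [Algebra ℚ Q] (φ : R →ₐ[ℚ] Q) {i j : Fin 3}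
    (hij : i ≠ j) (h : φ (X i) = φ (X j)) (δ : ℕ) : φ (F δ) = 0 := by
  have hX : ∀ k, φ (X (Equiv.swap i j k)) = φ (X k) := by
    intro k
    rcases eq_or_ne k i with rfl | hki
    · simp [h]
    rcases eq_or_ne k j with rfl | hkj
    · simp [h]
    · rw [Equiv.swap_apply_of_ne_of_ne hki hkj]
  have hanti : ∀ d : Fin 3 → ℕ, φ (T (d ∘ Equiv.swap i j)) = -φ (T d) := by
    intro d
    have hsum : ∑ k, (d ∘ Equiv.swap i j) k = ∑ k, d k := Equiv.sum_comp (Equiv.swap i j) d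
    rw [map_T, map_T, hsum, ← neg_mul, ← vandermondeProd_comp_swap _ hij]
    congr 1
    · congr 1
      ext k
      simp [hX]
    · rw [← Equiv.prod_comp (Equiv.swap i j)]
      refine Finset.prod_congr rfl fun k _ => ?_
      simp only [Function.comp_apply, Equiv.swap_apply_self, hX, quinticInv_congr φ (hX k)]
  have hsum : ∑ d ∈ simplexPoints δ, φ (T d) = -∑ d ∈ simplexPoints δ, φ (T d) := by
    rw [← Finset.sum_neg_distrib]
    refine Finset.sum_equiv (Equiv.arrowCongr (Equiv.swap i j) (Equiv.refl ℕ)) (fun d => ?_)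
      fun d _ => ?_
    · rw [mem_simplexPoints, mem_simplexPoints]
      exact (Equiv.sum_comp (Equiv.swap i j) d).symm ▸ Iff.rfl
    · exact (neg_eq_iff_eq_neg.2 (hanti d)).symm
  have htwo : IsUnit (2 : Q) := by
    simpa [map_ofNat (algebraMap ℚ Q)] using
      (IsUnit.mk0 (2 : ℚ) two_ne_zero).map (algebraMap ℚ Q)
  rw [F, map_sum]
  change ∑ d ∈ simplexPoints δ, φ (T d) = 0
  apply htwo.mul_left_cancel
  linear_combination hsum

lemma Vand_dvd_F (δ : ℕ) : Vand ∣ F δ := by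
  have hsubst : ∀ i j : Fin 3, HasSubst (Function.update (X : Fin 3 → R) i (X j)) :=
    fun i j => hasSubst_update_X i (by simp)
  have hne : ∀ {i j : Fin 3}, i ≠ j → (X i - X j : R) ≠ 0 := fun hij h =>
    hij (X_inj.1 (sub_eq_zero.1 h))
  have hF : ∀ {i j : Fin 3}, i ≠ j →
      subst (Function.update (X : Fin 3 → R) i (X j)) (F δ) = 0 := by
    intro i j hij
    rw [← coe_substAlgHom (hsubst i j)]
    refine map_F_eq_zero _ hij ?_ δ
    rw [substAlgHom_X, substAlgHom_X]
    simp [hij.symm]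
  obtain ⟨G, hG⟩ := X_sub_X_dvd_of_subst_eq_zero (show (0 : Fin 3) ≠ 1 by decide) (hF (by decide))
  obtain ⟨H, rfl⟩ : (X 0 - X 2 : R) ∣ G := by
    apply X_sub_X_dvd_of_subst_eq_zero (by decide)
    have h := hF (show (0 : Fin 3) ≠ 2 by decide)
    rw [hG, subst_mul (hsubst 0 2), subst_sub (hsubst 0 2), subst_X (hsubst 0 2),
      subst_X (hsubst 0 2)] at h
    exact (mul_eq_zero.1 h).resolve_left (by simpa using hne (by decide))
  obtain ⟨K, rfl⟩ : (X 1 - X 2 : R) ∣ H := by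
    apply X_sub_X_dvd_of_subst_eq_zero (by decide)
    have h := hF (show (1 : Fin 3) ≠ 2 by decide)
    simp only [hG, subst_mul (hsubst 1 2), subst_sub (hsubst 1 2), subst_X (hsubst 1 2)] at h
    refine ((mul_eq_zero.1 h).resolve_left ?_ |> mul_eq_zero.1).resolve_left ?_
    · simpa using hne (by decide)
    · simpa using hne (by decide)
  refine ⟨K, ?_⟩
  rw [hG, Vand_eq, vandermondeProd]
  ring

end Divisibility

/-! ### Restriction to a nilpotent curve and the constant terms -/

section ConstantTerm

/-- The truncated polynomial ring `ℚ[t]/(t⁴)`. -/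
abbrev TruncatedLine := PowerSeries ℚ ⧸ Ideal.span {(PowerSeries.X : PowerSeries ℚ) ^ 4}

lemma constantCoeff_curve (i : Fin 3) : MvPowerSeries.constantCoeff
    (![(PowerSeries.X : PowerSeries ℚ), 0, -PowerSeries.X] i) = 0 := by
  fin_cases i
  · exact PowerSeries.constantCoeff_X
  · exact map_zero _
  · exact (map_neg _ _).trans (by rw [neg_eq_zero]; exact PowerSeries.constantCoeff_X)

lemma hasSubst_curve :
    MvPowerSeries.HasSubst ![(PowerSeries.X : PowerSeries ℚ), 0, -PowerSeries.X] :=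
  MvPowerSeries.hasSubst_of_constantCoeff_zero constantCoeff_curve

/-- The restriction of power series to the curve `(t, 0, -t)` modulo `t⁴`. -/
def curveHom : R →ₐ[ℚ] TruncatedLine :=
  (Ideal.Quotient.mkₐ ℚ _).comp (MvPowerSeries.substAlgHom hasSubst_curve)

/-- The class of the coordinate `t` in `ℚ[t]/(t⁴)`. -/
def truncatedCoord : TruncatedLine := Ideal.Quotient.mk _ PowerSeries.X

lemma curveHom_X (i : Fin 3) :
    curveHom (MvPowerSeries.X i) = ![truncatedCoord, 0, -truncatedCoord] i := by
  have h : curveHom (MvPowerSeries.X i) = Ideal.Quotient.mk _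
      (![(PowerSeries.X : PowerSeries ℚ), 0, -PowerSeries.X] i) :=
    congrArg (Ideal.Quotient.mk _) (MvPowerSeries.substAlgHom_X hasSubst_curve i)
  rw [h]
  fin_cases i <;> simp [truncatedCoord]

lemma truncatedCoord_pow_four : truncatedCoord ^ 4 = 0 := by
  rw [truncatedCoord, ← map_pow, Ideal.Quotient.eq_zero_iff_mem]
  exact Ideal.mem_span_singleton_self _

lemma algebraMap_mul_truncatedCoord_cube {c : ℚ}
    (h : algebraMap ℚ TruncatedLine c * truncatedCoord ^ 3 = 0) : c = 0 := by
  have h' : Ideal.Quotient.mk (Ideal.span {(PowerSeries.X : PowerSeries ℚ) ^ 4})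
      (PowerSeries.C c * PowerSeries.X ^ 3) = 0 := by
    rw [map_mul, map_pow]
    exact h
  rw [Ideal.Quotient.eq_zero_iff_mem, Ideal.mem_span_singleton, PowerSeries.X_pow_dvd_iff] at h'
  simpa [PowerSeries.coeff_X_pow] using h' 3 (by norm_num)

lemma vandermondeProd_curve :
    vandermondeProd (fun i => curveHom (MvPowerSeries.X i)) = 2 * truncatedCoord ^ 3 := by
  simp only [vandermondeProd, curveHom_X]
  simp
  ring

lemma vandermondeProd_curve_mul_X (i : Fin 3) :
    vandermondeProd (fun i => curveHom (MvPowerSeries.X i)) * curveHom (MvPowerSeries.X i) = 0 := by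
  rw [vandermondeProd_curve, curveHom_X]
  fin_cases i
  · simpa using by linear_combination 2 * truncatedCoord_pow_four
  · simp
  · simpa using by linear_combination -2 * truncatedCoord_pow_four

lemma vandermondeProd_curve_mul (G : R) :
    vandermondeProd (fun i => curveHom (MvPowerSeries.X i)) * curveHom G =
      algebraMap ℚ TruncatedLine (MvPowerSeries.constantCoeff G) *
        vandermondeProd (fun i => curveHom (MvPowerSeries.X i)) := by
  have hzero : MvPowerSeries.constantCoeff (G - Cc (MvPowerSeries.constantCoeff G)) = 0 := by
    simp [Cc]
  obtain ⟨H, hH⟩ : (PowerSeries.X : PowerSeries ℚ) ∣ MvPowerSeries.subst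
      ![(PowerSeries.X : PowerSeries ℚ), 0, -PowerSeries.X]
      (G - Cc (MvPowerSeries.constantCoeff G)) := by
    rw [PowerSeries.X_dvd_iff]
    exact MvPowerSeries.constantCoeff_subst_eq_zero hasSubst_curve
      constantCoeff_curve hzero
  have h : curveHom (G - Cc (MvPowerSeries.constantCoeff G)) =
      truncatedCoord * Ideal.Quotient.mk _ H := by
    rw [truncatedCoord, ← map_mul, ← hH, ← MvPowerSeries.coe_substAlgHom hasSubst_curve]
    rfl
  rw [map_sub, map_Cc] at h
  have ht := vandermondeProd_curve_mul_X 0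
  rw [curveHom_X, Matrix.cons_val_zero] at ht
  linear_combination
    vandermondeProd (fun i => curveHom (MvPowerSeries.X i)) * h + Ideal.Quotient.mk _ H * ht

lemma curveHom_F (δ : ℕ) :
    curveHom (F δ) = moment (fun i => curveHom (MvPowerSeries.X i)) (quinticInv curveHom) δ
      (fun _ _ => 1) := by
  have hsum : ∑ i, curveHom (MvPowerSeries.X i) = 0 := by
    simp [Fin.sum_univ_three, curveHom_X]
  rw [F, map_sum, moment, weightedSum]
  refine Finset.sum_congr rfl fun d hd => ?_
  have hd' : ∑ j, d j = δ := mem_simplexPoints.1 hd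
  rw [map_T, hsum, hd', mul_one, mul_comm]
  congr 1
  refine Finset.prod_congr rfl fun i _ => ?_
  rw [weightFactor, mul_zero, zero_sub]
  simp only [sub_eq_add_neg]

lemma constantCoeff_eq_apery_sq {δ : ℕ} {G : R} (hG : F δ = Vand * G) :
    MvPowerSeries.constantCoeff G = apery δ ^ 2 := by
  have hx : ∀ i, curveHom (MvPowerSeries.X i) ^ 5 = 0 := by
    intro i
    rw [curveHom_X]
    fin_cases i
    · simpa using by linear_combination truncatedCoord * truncatedCoord_pow_four
    · simp
    · simpa using by linear_combination -truncatedCoord * truncatedCoord_pow_four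
  have hs : ∑ i, curveHom (MvPowerSeries.X i) = 0 := by
    simp [Fin.sum_univ_three, curveHom_X]
  have h := congrArg curveHom hG
  rw [curveHom_F, (moment_eq_apery (isQuinticRecursion_quinticInv curveHom)
    (quinticInv_zero curveHom) hx hs vandermondeProd_curve_mul_X δ).1, map_mul, Vand_eq,
    map_vandermondeProd, vandermondeProd_curve_mul, vandermondeProd_curve] at h
  have h2 : 2 * (MvPowerSeries.constantCoeff G - apery δ ^ 2) = 0 := by
    apply algebraMap_mul_truncatedCoord_cube
    rw [map_mul, map_sub, map_ofNat]
    linear_combination -h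
  linarith

end ConstantTerm

/-! ### The Picard–Fuchs equation -/

lemma coeff_th (f : PowerSeries ℚ) (k : ℕ) :
    PowerSeries.coeff k (th f) = k * PowerSeries.coeff k f := by
  rw [th, PowerSeries.coeff_mk]

lemma coeff_ofNat_mul (m : ℕ) [m.AtLeastTwo] (f : PowerSeries ℚ) (k : ℕ) :
    PowerSeries.coeff k ((ofNat(m) : PowerSeries ℚ) * f) =
      ofNat(m) * PowerSeries.coeff k f := by
  rw [← map_ofNat (PowerSeries.C (R := ℚ)) m, PowerSeries.coeff_C_mul]

lemma apery_sq_recurrence (k : ℕ) {z : ℚ} (hz : z = k) :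
    (z + 5) ^ 4 * apery (k + 5) ^ 2 -
      (124 * (z + 4) ^ 4 + 242 * (z + 4) ^ 3 + 187 * (z + 4) ^ 2 + 66 * (z + 4) + 9) *
        apery (k + 4) ^ 2 +
      (123 * (z + 3) ^ 4 - 246 * (z + 3) ^ 3 - 787 * (z + 3) ^ 2 - 554 * (z + 3) - 124) *
        apery (k + 3) ^ 2 +
      (123 * (z + 2) ^ 4 + 738 * (z + 2) ^ 3 + 689 * (z + 2) ^ 2 + 210 * (z + 2) + 12) *
        apery (k + 2) ^ 2 -
      (124 * (z + 1) ^ 4 + 254 * (z + 1) ^ 3 + 205 * (z + 1) ^ 2 + 78 * (z + 1) + 12) *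
        apery (k + 1) ^ 2 +
      (z + 1) ^ 4 * apery k ^ 2 = 0 := by
  have h₁ : (z + 1) ≠ 0 := by rw [hz]; positivity
  have h₂ : (z + 2) ≠ 0 := by rw [hz]; positivity
  have h₄ : (z + 4) ≠ 0 := by rw [hz]; positivity
  have h₅ : (z + 5) ≠ 0 := by rw [hz]; positivity
  have e₁ : apery (k + 1) = ((z + 3) ^ 2 * apery (k + 3) -
      (11 * (z + 2) ^ 2 + 11 * (z + 2) + 3) * apery (k + 2)) / (z + 2) ^ 2 := by
    have := apery_add_two (k + 1)
    have h₃ : (k : ℚ) + 3 ≠ 0 := by positivity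
    push_cast at this
    rw [this, hz]
    field_simp
    ring
  have e₀ : apery k = ((z + 2) ^ 2 * apery (k + 2) -
      (11 * (z + 1) ^ 2 + 11 * (z + 1) + 3) * apery (k + 1)) / (z + 1) ^ 2 := by
    have := apery_add_two k
    rw [this, hz] at *
    field_simp
    ring
  have e₄ : apery (k + 4) = ((11 * (z + 3) ^ 2 + 11 * (z + 3) + 3) * apery (k + 3) +
      (z + 3) ^ 2 * apery (k + 2)) / (z + 4) ^ 2 := by
    rw [hz, apery_add_two (k + 2)]
    push_cast
    ring_nf
  have e₅ : apery (k + 5) = ((11 * (z + 4) ^ 2 + 11 * (z + 4) + 3) * apery (k + 4) +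
      (z + 4) ^ 2 * apery (k + 3)) / (z + 5) ^ 2 := by
    rw [hz, apery_add_two (k + 3)]
    push_cast
    ring_nf
  rw [e₅, e₄, e₀, e₁]
  field_simp
  ring

/-- every `F_δ` is divisible by `Δ`, and the series `I₀ = Σ (F_δ/Δ)(0) q^δ`
is annihilated by the Picard–Fuchs operator of Calabi–Yau No. 5 (`Λ²Q(1)` on `G(2,5)`). -/
theorem stmt_7 :
    (∀ δ : ℕ, ∃ G : R, F δ = Vand * G) ∧
    (∀ G : ℕ → R, (∀ δ : ℕ, F δ = Vand * G δ) →
      ∀ I₀ : PowerSeries ℚ,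
        I₀ = PowerSeries.mk (fun δ => MvPowerSeries.constantCoeff (G δ)) →
        th^[4] I₀ -
          PowerSeries.X * (124 * th^[4] I₀ + 242 * th^[3] I₀ + 187 * th^[2] I₀ +
            66 * th I₀ + 9 * I₀) +
          PowerSeries.X ^ 2 * (123 * th^[4] I₀ - 246 * th^[3] I₀ - 787 * th^[2] I₀ -
            554 * th I₀ - 124 * I₀) +
          PowerSeries.X ^ 3 * (123 * th^[4] I₀ + 738 * th^[3] I₀ + 689 * th^[2] I₀ +
            210 * th I₀ + 12 * I₀) -
          PowerSeries.X ^ 4 * (124 * th^[4] I₀ + 254 * th^[3] I₀ + 205 * th^[2] I₀ +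
            78 * th I₀ + 12 * I₀) +
          PowerSeries.X ^ 5 * ((fun g => th g + g) ((fun g => th g + g) ((fun g => th g + g)
            ((fun g => th g + g) I₀)))) = 0) := by
  refine ⟨fun δ => Vand_dvd_F δ, ?_⟩
  rintro G hG I₀ rfl
  have hX : ∀ (k : ℕ) (f : PowerSeries ℚ), PowerSeries.coeff k (PowerSeries.X * f) =
      if 1 ≤ k then PowerSeries.coeff (k - 1) f else 0 := by
    intro k f
    simpa using PowerSeries.coeff_X_pow_mul' f 1 k
  ext k
  simp only [fun δ => constantCoeff_eq_apery_sq (hG δ), Function.iterate_succ,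
    Function.iterate_zero, Function.comp_apply, id, map_add, map_sub, map_zero, hX,
    PowerSeries.coeff_X_pow_mul', coeff_th, coeff_ofNat_mul, PowerSeries.coeff_mk]
  rcases lt_or_ge k 5 with hk | hk
  · interval_cases k <;> norm_num [apery]
  · obtain ⟨k, rfl⟩ := Nat.exists_eq_add_of_le' hk
    have h := apery_sq_recurrence k rfl
    simp only [show 1 ≤ k + 5 by omega, show 2 ≤ k + 5 by omega, show 3 ≤ k + 5 by omega,
      show 4 ≤ k + 5 by omega, show 5 ≤ k + 5 by omega, if_true, Nat.add_sub_cancel,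
      show k + 5 - 1 = k + 4 by omega, show k + 5 - 2 = k + 3 by omega,
      show k + 5 - 3 = k + 2 by omega, show k + 5 - 4 = k + 1 by omega]
    push_cast
    linear_combination h

end Stmt7
end
end

section
/- Take k = 5, n = 7 and the weight vectors w¹,…,w⁵ the five vectors in ℤ⁵ with four coordinates 1 and one coordinate 0, w⁶ = (1,1,1,1,1), w⁷ = (2,2,2,2,2) in the Vandermonde-quotient construction. Then for every δ ≥ 0 the power series F_δ ∈ ℚ[[x₁,…,x₅]] is divisible by Δ = ∏_{1≤i<j≤5}(x_i−x_j), and the resulting series I₀(q) = Σ_{δ≥0} a_δ q^δ with a_δ = (F_δ/Δ)(0) satisfies {θ⁴ − 6q(2θ+1)²(3θ²+3θ+1) − 108q²(θ+1)²(2θ+1)(2θ+3)} I₀ = 0. -/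
noncomputable section
namespace Stmt8

/-- The multivariable power series ring `ℚ[[x₁,…,x_5]]`. -/
abbrev R := MvPowerSeries (Fin 5) ℚ

/-- The constant `a` in `R`. -/
def Cc (a : ℚ) : R := MvPowerSeries.C a

/-- The pairs `i < j`. -/
def pairs : Finset (Fin 5 × Fin 5) := Finset.univ.filter fun p => p.1 < p.2

/-- The Vandermonde element `Δ = ∏_{i<j}(x_i − x_j)`. -/
def Vand : R := ∏ p ∈ pairs, (MvPowerSeries.X p.1 - MvPowerSeries.X p.2)

/-- The weight vectors. -/
def ws : List (Fin 5 → ℕ) := [![0, 1, 1, 1, 1], ![1, 0, 1, 1, 1], ![1, 1, 0, 1, 1], ![1, 1, 1, 0, 1], ![1, 1, 1, 1, 0], ![1, 1, 1, 1, 1], ![2, 2, 2, 2, 2]]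

/-- `n = 7`. -/
def n : ℕ := 7

/-- The term `T_d` of the Vandermonde-quotient construction:
`T_d = ∏_{i<j}(x_i−x_j+d_i−d_j) · ∏_s ∏_{m=1}^{⟨wˢ,d⟩}(⟨wˢ,x⟩+m) · u_d⁻¹`. -/
def T (d : Fin 5 → ℕ) : R :=
  (∏ p ∈ pairs,
      (MvPowerSeries.X p.1 - MvPowerSeries.X p.2 + Cc ((d p.1 : ℚ) - (d p.2 : ℚ)))) *
    (ws.map fun w =>
      ∏ m ∈ Finset.Icc 1 (∑ j, w j * d j),
        ((∑ j, Cc ((w j : ℚ)) * MvPowerSeries.X j) + Cc (m : ℚ))).prod *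
    (∏ j, ∏ m ∈ Finset.Icc 1 (d j), (MvPowerSeries.X j + Cc (m : ℚ)) ^ n)⁻¹

/-- `F_δ = Σ_{d₁+⋯+d_k=δ} T_d`. -/
def F (δ : ℕ) : R :=
  ∑ d ∈ (Fintype.piFinset fun _ : Fin 5 => Finset.range (δ + 1)).filter
      (fun d => ∑ j, d j = δ), T d

/-- The Euler operator `θ = q·d/dq` on `ℚ[[q]]`. -/
def th (f : PowerSeries ℚ) : PowerSeries ℚ :=
  PowerSeries.mk fun d => (d : ℚ) * PowerSeries.coeff d f

open Finset in
/-- The one-variable factor `∏_{m=1}^{N-d} (m - x) / ∏_{m=1}^{d} (x + m)⁷`, and `0` for `d > N`. -/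
def factor (N d : ℕ) : PowerSeries ℚ :=
  if d ≤ N then (∏ m ∈ Icc 1 (N - d), (PowerSeries.C (m : ℚ) - PowerSeries.X)) *
    (∏ m ∈ Icc 1 d, (PowerSeries.X + PowerSeries.C (m : ℚ)) ^ 7)⁻¹ else 0

/-- The generating series in `d` of the `xⁱ`-coefficients of `(x + d)ʲ * factor N d`. -/
def entry (N i j : ℕ) : PowerSeries ℚ :=
  PowerSeries.mk fun d =>
    PowerSeries.coeff i ((PowerSeries.X + PowerSeries.C (d : ℚ)) ^ j * factor N d)

/-- The `5 × 5` minor of `entry N` with rows `0, …, 4` and columns `c`. -/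
def minor (N : ℕ) (c : Fin 5 → ℕ) : PowerSeries ℚ :=
  (Matrix.of fun i j : Fin 5 => entry N i (c j)).det

/-- The `qᴺ`-coefficient of the minor of `entry N` with columns `a, b, c, d, e`. -/
def mc (N a b c d e : ℕ) : ℚ := PowerSeries.coeff N (minor N ![a, b, c, d, e])

theorem factor_succ_left {N d : ℕ} (h : d ≤ N) :
    factor (N + 1) d =
      (PowerSeries.C ((N : ℚ) + 1) - (PowerSeries.X + PowerSeries.C (d : ℚ))) * factor N d := by
  have e : N + 1 - d = N - d + 1 := by omega
  rw [factor, factor, if_pos h, if_pos (by omega), e, Finset.prod_Icc_succ_top (by omega)]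
  have : PowerSeries.C (((N - d + 1 : ℕ) : ℚ)) - PowerSeries.X =
      PowerSeries.C ((N : ℚ) + 1) - (PowerSeries.X + PowerSeries.C (d : ℚ)) := by
    rw [Nat.cast_add, Nat.cast_sub h]
    simp only [map_add, map_sub, Nat.cast_one]
    ring
  rw [this]
  ring

theorem factor_succ_succ (N d : ℕ) :
    (PowerSeries.X + PowerSeries.C ((d : ℚ) + 1)) ^ 7 * factor (N + 1) (d + 1) = factor N d := by
  by_cases h : d ≤ N
  · rw [factor, factor, if_pos h, if_pos (by omega), Finset.prod_Icc_succ_top (by omega),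
      Nat.add_sub_add_right, PowerSeries.mul_inv_rev]
    have hne : PowerSeries.constantCoeff
        ((PowerSeries.X + PowerSeries.C ((d : ℚ) + 1)) ^ 7 : PowerSeries ℚ) ≠ 0 := by
      simp
      positivity
    have := PowerSeries.mul_inv_cancel _ hne
    push_cast
    linear_combination (∏ m ∈ Finset.Icc 1 (N - d), (PowerSeries.C (m : ℚ) - PowerSeries.X)) *
      (∏ m ∈ Finset.Icc 1 d, (PowerSeries.X + PowerSeries.C (m : ℚ)) ^ 7)⁻¹ * this
  · rw [factor, factor, if_neg h, if_neg (by omega), mul_zero]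

theorem entry_seven_succ (N : ℕ) (i : Fin 5) :
    entry (N + 1) i 7 = PowerSeries.X * entry N i 0 := by
  ext d
  cases d with
  | zero =>
    have : (i : ℕ) < 7 := by omega
    simp [entry, PowerSeries.coeff_X_pow_mul', this.not_ge]
  | succ d =>
    rw [PowerSeries.coeff_succ_X_mul]
    simp only [entry, PowerSeries.coeff_mk, Nat.cast_add, Nat.cast_one, factor_succ_succ,
      pow_zero, one_mul]

theorem entry_succ_congr (N i j : ℕ) :
    PowerSeries.X ^ (N + 1) ∣
      entry (N + 1) i j - (((N : ℚ) + 1) • entry N i j - entry N i (j + 1)) := by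
  rw [PowerSeries.X_pow_dvd_iff]
  intro d hd
  simp only [entry, map_sub, PowerSeries.coeff_mk, map_smul, smul_eq_mul]
  rw [factor_succ_left (by omega), ← PowerSeries.coeff_C_mul, ← map_sub, ← map_sub,
    ← map_zero (PowerSeries.coeff (R := ℚ) i)]
  congr 1
  ring

theorem nsmul_coeff_entry (N i j d : ℕ) :
    (d : ℚ) * PowerSeries.coeff d (entry N i j) =
      PowerSeries.coeff d (entry N i (j + 1)) -
        (if i = 0 then 0 else PowerSeries.coeff d (entry N (i - 1) j)) := by
  simp only [entry, PowerSeries.coeff_mk]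
  rw [pow_succ', mul_assoc, add_mul, map_add, PowerSeries.coeff_C_mul]
  cases i with
  | zero => simp
  | succ i => simp [PowerSeries.coeff_succ_X_mul]

/-- `q d/dq` as a derivation. -/
def euler : Derivation ℚ (PowerSeries ℚ) (PowerSeries ℚ) :=
  (PowerSeries.X : PowerSeries ℚ) • PowerSeries.derivative ℚ

theorem coeff_euler (f : PowerSeries ℚ) (d : ℕ) :
    PowerSeries.coeff d (euler f) = d * PowerSeries.coeff d f := by
  cases d with
  | zero => simp [euler]
  | succ d =>
    simp [euler, PowerSeries.coeff_succ_X_mul, PowerSeries.coeff_derivative, mul_comm]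

theorem euler_entry (N i j : ℕ) :
    euler (entry N i j) =
      entry N i (j + 1) - (if i = 0 then 0 else entry N (i - 1) j) := by
  ext d
  rw [coeff_euler, nsmul_coeff_entry, map_sub]
  split_ifs <;> simp

theorem sum_det_updateRow_eq_sum_det_updateCol {ι S : Type*} [Fintype ι] [DecidableEq ι]
    [CommRing S] (A B : Matrix ι ι S) :
    ∑ i, (A.updateRow i (B i)).det = ∑ j, (A.updateCol j fun i => B i j).det := by
  simp only [Matrix.det_apply]
  rw [Finset.sum_comm]
  conv_rhs => rw [Finset.sum_comm]
  refine Finset.sum_congr rfl fun σ _ => ?_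
  rw [← Equiv.sum_comp σ]
  refine Finset.sum_congr rfl fun j _ => ?_
  congr 1
  refine Finset.prod_congr rfl fun k _ => ?_
  by_cases h : k = j
  · subst h
    simp
  · rw [Matrix.updateRow_ne (σ.injective.ne h), Matrix.updateCol_ne h]

theorem derivation_prod {k S ι : Type*} [DecidableEq ι] [CommRing k] [CommRing S] [Algebra k S]
    (D : Derivation k S S) (s : Finset ι) (f : ι → S) :
    D (∏ i ∈ s, f i) = ∑ j ∈ s, ∏ i ∈ s, Function.update f j (D (f j)) i := by
  induction s using Finset.induction_on with
  | empty => simp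
  | insert a s ha ih =>
    rw [Finset.prod_insert ha, D.leibniz, ih, Finset.sum_insert ha, Finset.prod_insert ha,
      Function.update_self, Finset.prod_update_of_notMem ha, smul_eq_mul, smul_eq_mul,
      Finset.mul_sum, add_comm, mul_comm]
    congr 1
    refine Finset.sum_congr rfl fun j hj => ?_
    rw [Finset.prod_insert ha, Function.update_of_ne (by rintro rfl; exact ha hj)]

theorem derivation_det {k S ι : Type*} [DecidableEq ι] [Fintype ι] [CommRing k] [CommRing S]
    [Algebra k S] (D : Derivation k S S) (A : Matrix ι ι S) :
    D A.det = ∑ j, (A.updateCol j fun i => D (A i j)).det := by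
  simp only [Matrix.det_apply]
  rw [map_sum, Finset.sum_comm]
  refine Finset.sum_congr rfl fun σ _ => ?_
  rw [← Finset.smul_sum, Units.smul_def, Units.smul_def, map_zsmul, derivation_prod]
  congr 1
  refine Finset.sum_congr rfl fun j _ => Finset.prod_congr rfl fun i _ => ?_
  by_cases h : i = j
  · subst h
    simp
  · rw [Function.update_of_ne h, Matrix.updateCol_ne h]

/-- Multiplying an alternant by `∑ᵢ (xᵢ + dᵢ)` raises one exponent at a time. -/
theorem euler_minor (N : ℕ) (c : Fin 5 → ℕ) :
    euler (minor N c) = ∑ k, minor N (Function.update c k (c k + 1)) := by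
  set A : Matrix (Fin 5) (Fin 5) (PowerSeries ℚ) := Matrix.of fun i j => entry N i (c j) with hA
  let L : Matrix (Fin 5) (Fin 5) (PowerSeries ℚ) :=
    Matrix.of fun i j => if (i : ℕ) = 0 then 0 else entry N (i - 1) (c j)
  have hL : ∑ j, (A.updateCol j fun i => L i j).det = 0 := by
    rw [← sum_det_updateRow_eq_sum_det_updateCol]
    refine Finset.sum_eq_zero fun i _ => ?_
    by_cases h : (i : ℕ) = 0
    · refine Matrix.det_eq_zero_of_row_eq_zero i fun j => ?_
      rw [Matrix.updateRow_self]
      exact if_pos h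
    · have hlt : (i : ℕ) - 1 < 5 := by omega
      have hne : i ≠ ⟨i - 1, hlt⟩ := fun e => by
        have := congrArg Fin.val e
        simp only at this
        omega
      refine Matrix.det_zero_of_row_eq hne ?_
      ext1 j
      rw [Matrix.updateRow_self, Matrix.updateRow_ne hne.symm]
      exact if_neg h
  have key : ∀ j, (A.updateCol j fun i => euler (A i j)).det =
      minor N (Function.update c j (c j + 1)) - (A.updateCol j fun i => L i j).det := by
    intro j
    have h1 : (fun i => euler (A i j)) =
        (fun i : Fin 5 => entry N i (c j + 1)) + (-1 : PowerSeries ℚ) • fun i => L i j := by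
      ext1 i
      simp only [hA, L, Matrix.of_apply, euler_entry, Pi.add_apply, Pi.smul_apply, smul_eq_mul]
      ring
    rw [h1, Matrix.det_updateCol_add, Matrix.det_updateCol_smul, neg_one_mul, ← sub_eq_add_neg]
    congr 2
    ext1 i k
    by_cases h : k = j
    · subst h
      simp
    · rw [Matrix.updateCol_ne h]
      simp [hA, h]
  rw [minor, ← hA, derivation_det, Finset.sum_congr rfl fun j _ => key j, Finset.sum_sub_distrib,
    hL, sub_zero]

/-- The Pieri rule for the numbers `mc`. -/
theorem natCast_mul_mc (N a b c d e : ℕ) :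
    (N : ℚ) * mc N a b c d e = mc N (a + 1) b c d e + mc N a (b + 1) c d e +
      mc N a b (c + 1) d e + mc N a b c (d + 1) e + mc N a b c d (e + 1) := by
  have h := congrArg (PowerSeries.coeff N) (euler_minor N ![a, b, c, d, e])
  rw [coeff_euler, Fin.sum_univ_five] at h
  simp only [map_add] at h
  have update_eq : ∀ (k : Fin 5) (v : Fin 5 → ℕ), (∀ i, v i = Function.update ![a, b, c, d, e] k
      (![a, b, c, d, e] k + 1) i) →
      minor N (Function.update ![a, b, c, d, e] k (![a, b, c, d, e] k + 1)) = minor N v :=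
    fun k v hv => congrArg _ (funext fun i => (hv i).symm)
  rw [update_eq 0 ![a + 1, b, c, d, e] (by simp [Fin.forall_fin_succ]),
    update_eq 1 ![a, b + 1, c, d, e] (by simp [Fin.forall_fin_succ]),
    update_eq 2 ![a, b, c + 1, d, e] (by simp [Fin.forall_fin_succ]),
    update_eq 3 ![a, b, c, d + 1, e] (by simp [Fin.forall_fin_succ]),
    update_eq 4 ![a, b, c, d, e + 1] (by simp [Fin.forall_fin_succ])] at h
  exact h

theorem minor_eq_zero {c : Fin 5 → ℕ} {i j : Fin 5} (N : ℕ) (hij : i ≠ j) (h : c i = c j) :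
    minor N c = 0 :=
  Matrix.det_zero_of_column_eq hij fun k => by simp [h]

theorem mc_self_first (N a c d e : ℕ) : mc N a a c d e = 0 := by
  rw [mc, minor_eq_zero N (i := 0) (j := 1) (by decide) rfl, map_zero]

theorem mc_self_second (N a b d e : ℕ) : mc N a b b d e = 0 := by
  rw [mc, minor_eq_zero N (i := 1) (j := 2) (by decide) rfl, map_zero]

theorem mc_self_third (N a b c e : ℕ) : mc N a b c c e = 0 := by
  rw [mc, minor_eq_zero N (i := 2) (j := 3) (by decide) rfl, map_zero]

theorem mc_self_fourth (N a b c d : ℕ) : mc N a b c d d = 0 := by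
  rw [mc, minor_eq_zero N (i := 3) (j := 4) (by decide) rfl, map_zero]

/-- The vector of the first five `xⁱ`-coefficient series attached to the exponent `j`. -/
def col (N j : ℕ) : Fin 5 → PowerSeries ℚ := fun i => entry N i j

/-- The `qᴺ`-coefficient of the determinant with given columns. -/
def detCoeff (N : ℕ) (v : Fin 5 → Fin 5 → PowerSeries ℚ) : ℚ :=
  PowerSeries.coeff N (Matrix.of v).det

theorem mc_eq_detCoeff (N a b c d e : ℕ) :
    mc N a b c d e = detCoeff N ![col N a, col N b, col N c, col N d, col N e] := by
  rw [mc, minor, detCoeff, ← Matrix.det_transpose]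
  refine congrArg (fun A : Matrix (Fin 5) (Fin 5) (PowerSeries ℚ) => PowerSeries.coeff N A.det) ?_
  ext1 i j
  fin_cases i <;> rfl

theorem detCoeff_rotate (N : ℕ) (v₀ v₁ v₂ v₃ v₄ : Fin 5 → PowerSeries ℚ) :
    detCoeff N ![v₁, v₂, v₃, v₄, v₀] = detCoeff N ![v₀, v₁, v₂, v₃, v₄] := by
  have h := Matrix.det_permute (finRotate 5) (Matrix.of ![v₀, v₁, v₂, v₃, v₄])
  rw [sign_finRotate] at h
  simp only [detCoeff]
  rw [show Matrix.of ![v₁, v₂, v₃, v₄, v₀] =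
    (Matrix.of ![v₀, v₁, v₂, v₃, v₄]).submatrix (finRotate 5) id by
      ext1 i j
      fin_cases i <;> rfl, h]
  norm_num

theorem detCoeff_update (N : ℕ) (k : Fin 5) (v : Fin 5 → Fin 5 → PowerSeries ℚ)
    (z : Fin 5 → PowerSeries ℚ) : detCoeff N (Function.update v k z) =
      PowerSeries.coeff N ((Matrix.of v).updateRow k z).det := rfl

theorem detCoeff_smul_sub (N : ℕ) (k : Fin 5) (v : Fin 5 → Fin 5 → PowerSeries ℚ) (r : ℚ)
    (x y : Fin 5 → PowerSeries ℚ) :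
    detCoeff N (Function.update v k (r • x - y)) =
      r * detCoeff N (Function.update v k x) - detCoeff N (Function.update v k y) := by
  have h : r • x - y = (PowerSeries.C r) • x + (-1 : PowerSeries ℚ) • y := by
    ext1 i
    simp only [Pi.sub_apply, Pi.add_apply, Pi.smul_apply, PowerSeries.smul_eq_C_mul, smul_eq_mul]
    ring
  rw [detCoeff_update, detCoeff_update, detCoeff_update, h, Matrix.det_updateRow_add,
    Matrix.det_updateRow_smul, Matrix.det_updateRow_smul, map_add, PowerSeries.coeff_C_mul,
    neg_one_mul, map_neg, ← sub_eq_add_neg]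

theorem update_vec_one {α : Type*} (a b c d e x : α) :
    Function.update ![a, b, c, d, e] 1 x = ![a, x, c, d, e] := by
  ext i
  fin_cases i <;> rfl

theorem update_vec_two {α : Type*} (a b c d e x : α) :
    Function.update ![a, b, c, d, e] 2 x = ![a, b, x, d, e] := by
  ext i
  fin_cases i <;> rfl

theorem update_vec_three {α : Type*} (a b c d e x : α) :
    Function.update ![a, b, c, d, e] 3 x = ![a, b, c, x, e] := by
  ext i
  fin_cases i <;> rfl

theorem update_vec_four {α : Type*} (a b c d e x : α) :
    Function.update ![a, b, c, d, e] 4 x = ![a, b, c, d, x] := by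
  ext i
  fin_cases i <;> rfl

theorem detCoeff_expand (N : ℕ) (r : ℚ) (z a a' b b' c c' d d' : Fin 5 → PowerSeries ℚ) :
    detCoeff N ![z, r • a - a', r • b - b', r • c - c', r • d - d'] =
      r ^ 4 * detCoeff N ![z, a, b, c, d] -
      r ^ 3 * (detCoeff N ![z, a', b, c, d] + detCoeff N ![z, a, b', c, d] +
        detCoeff N ![z, a, b, c', d] + detCoeff N ![z, a, b, c, d']) +
      r ^ 2 * (detCoeff N ![z, a', b', c, d] + detCoeff N ![z, a', b, c', d] +
        detCoeff N ![z, a', b, c, d'] + detCoeff N ![z, a, b', c', d] +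
        detCoeff N ![z, a, b', c, d'] + detCoeff N ![z, a, b, c', d']) -
      r * (detCoeff N ![z, a', b', c', d] + detCoeff N ![z, a', b', c, d'] +
        detCoeff N ![z, a', b, c', d'] + detCoeff N ![z, a, b', c', d']) +
      detCoeff N ![z, a', b', c', d'] := by
  have h₁ : ∀ x y p q s, detCoeff N ![z, r • x - y, p, q, s] =
      r * detCoeff N ![z, x, p, q, s] - detCoeff N ![z, y, p, q, s] := fun x y p q s => by
    have := detCoeff_smul_sub N 1 ![z, x, p, q, s] r x y
    rwa [update_vec_one, update_vec_one, update_vec_one] at this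
  have h₂ : ∀ x y p q s, detCoeff N ![z, p, r • x - y, q, s] =
      r * detCoeff N ![z, p, x, q, s] - detCoeff N ![z, p, y, q, s] := fun x y p q s => by
    have := detCoeff_smul_sub N 2 ![z, p, x, q, s] r x y
    rwa [update_vec_two, update_vec_two, update_vec_two] at this
  have h₃ : ∀ x y p q s, detCoeff N ![z, p, q, r • x - y, s] =
      r * detCoeff N ![z, p, q, x, s] - detCoeff N ![z, p, q, y, s] := fun x y p q s => by
    have := detCoeff_smul_sub N 3 ![z, p, q, x, s] r x y
    rwa [update_vec_three, update_vec_three, update_vec_three] at this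
  have h₄ : ∀ x y p q s, detCoeff N ![z, p, q, s, r • x - y] =
      r * detCoeff N ![z, p, q, s, x] - detCoeff N ![z, p, q, s, y] := fun x y p q s => by
    have := detCoeff_smul_sub N 4 ![z, p, q, s, x] r x y
    rwa [update_vec_four, update_vec_four, update_vec_four] at this
  simp only [h₁, h₂, h₃, h₄]
  ring

theorem detCoeff_congr {N : ℕ} {v w : Fin 5 → Fin 5 → PowerSeries ℚ}
    (h : ∀ i j, PowerSeries.X ^ (N + 1) ∣ v i j - w i j) : detCoeff N v = detCoeff N w := by
  have hdvd : PowerSeries.X ^ (N + 1) ∣ (Matrix.of v).det - (Matrix.of w).det := by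
    rw [← Ideal.mem_span_singleton, ← Ideal.Quotient.eq, RingHom.map_det, RingHom.map_det]
    congr 1
    ext1 i j
    exact Ideal.Quotient.eq.2 (Ideal.mem_span_singleton.2 (h i j))
  have := PowerSeries.X_pow_dvd_iff.1 hdvd N (Nat.lt_succ_self N)
  rwa [map_sub, sub_eq_zero] at this

theorem mc_succ_seven_eq_detCoeff (N a b c d : ℕ) :
    mc (N + 1) a b c d 7 =
      detCoeff N ![col (N + 1) a, col (N + 1) b, col (N + 1) c, col (N + 1) d, col N 0] := by
  have h : col (N + 1) 7 = (PowerSeries.X : PowerSeries ℚ) • col N 0 :=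
    funext (entry_seven_succ N)
  rw [mc_eq_detCoeff, h, ← update_vec_four _ _ _ _ (col N 0), detCoeff_update,
    Matrix.det_updateRow_smul, PowerSeries.coeff_succ_X_mul, ← detCoeff_update, update_vec_four]

/-- Passing from `N` to `N + 1` in the minors which contain the column `7`. -/
theorem mc_succ_seven (N a b c d : ℕ) :
    mc (N + 1) a b c d 7 =
      (N + 1 : ℚ) ^ 4 * mc N 0 a b c d -
      (N + 1 : ℚ) ^ 3 * (mc N 0 (a + 1) b c d + mc N 0 a (b + 1) c d +
        mc N 0 a b (c + 1) d + mc N 0 a b c (d + 1)) +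
      (N + 1 : ℚ) ^ 2 * (mc N 0 (a + 1) (b + 1) c d + mc N 0 (a + 1) b (c + 1) d +
        mc N 0 (a + 1) b c (d + 1) + mc N 0 a (b + 1) (c + 1) d +
        mc N 0 a (b + 1) c (d + 1) + mc N 0 a b (c + 1) (d + 1)) -
      (N + 1 : ℚ) * (mc N 0 (a + 1) (b + 1) (c + 1) d + mc N 0 (a + 1) (b + 1) c (d + 1) +
        mc N 0 (a + 1) b (c + 1) (d + 1) + mc N 0 a (b + 1) (c + 1) (d + 1)) +
      mc N 0 (a + 1) (b + 1) (c + 1) (d + 1) := by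
  simp only [mc_eq_detCoeff N]
  rw [← detCoeff_expand, ← detCoeff_rotate, mc_succ_seven_eq_detCoeff]
  refine detCoeff_congr fun i j => ?_
  fin_cases i
  · exact entry_succ_congr N j a
  · exact entry_succ_congr N j b
  · exact entry_succ_congr N j c
  · exact entry_succ_congr N j d
  · simp

/-- The numbers `mc N 0 a b c d` with `a < b < c < d ≤ 6` as combinations of `A` and `B`; the case
of interest is `r = N`, `A = mc N 0 1 2 3 4` and `B = mc (N - 1) 0 1 2 3 4`. -/
structure Relations (N : ℕ) (r A B : ℚ) : Prop where
  h01235 : mc N 0 1 2 3 5 = r * A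
  h01236 : mc N 0 1 2 3 6 = 1 / 3 * r ^ 2 * A
  h01245 : mc N 0 1 2 4 5 = 2 / 3 * r ^ 2 * A
  h01246 : mc N 0 1 2 4 6 = 1 / 3 * r ^ 3 * A - B
  h01256 : mc N 0 1 2 5 6 = 1 / 9 * r ^ 4 * A + (-r + 2 / 3) * B
  h01345 : mc N 0 1 3 4 5 = 1 / 3 * r ^ 3 * A + B
  h01346 : mc N 0 1 3 4 6 = 2 / 9 * r ^ 4 * A + 1 / 3 * B
  h01356 : mc N 0 1 3 5 6 = 1 / 9 * r ^ 5 * A + (-1 / 3 * r ^ 2 + 1 / 3 * r - 1 / 3) * B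
  h01456 : mc N 0 1 4 5 6 = 2 / 27 * r ^ 6 * A + (-2 / 3 * r ^ 3 + 2 / 3 * r ^ 2 - 4 / 9 * r + 2 /
    9) * B
  h02345 : mc N 0 2 3 4 5 = 1 / 9 * r ^ 4 * A + (r - 1 / 3) * B
  h02346 : mc N 0 2 3 4 6 = 1 / 9 * r ^ 5 * A + (-1 / 3 * r ^ 2 + 1 / 3 * r - 1 / 3) * B
  h02356 : mc N 0 2 3 5 6 = 2 / 27 * r ^ 6 * A + (-2 / 3 * r ^ 3 + 2 / 3 * r ^ 2 - 4 / 9 * r + 2 /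
    9) * B
  h02456 : mc N 0 2 4 5 6 = (2 / 27 * r ^ 7 - 5 / 81 * r ^ 6) * A + (-10 / 9 * r ^ 4 + 23 / 9 * r
    ^ 3 - 22 / 9 * r ^ 2 + 34 / 27 * r - 8 / 27) * B
  h03456 : mc N 0 3 4 5 6 = 0

set_option linter.unusedSimpArgs false in
theorem relations_succ {N : ℕ} {A B A' : ℚ} (h : Relations N N A B)
    (hA : mc N 0 1 2 3 4 = A) (hA' : mc (N + 1) 0 1 2 3 4 = A') :
    Relations (N + 1) ((N : ℚ) + 1) A' A ∧
      ((N : ℚ) + 1) ^ 6 * A' =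
        (18 * ((N : ℚ) + 1) ^ 3 - 27 * ((N : ℚ) + 1) ^ 2 + 15 * ((N : ℚ) + 1) - 3) * A +
          27 * B := by
  obtain ⟨h01235, h01236, h01245, h01246, h01256, h01345, h01346, h01356, h01456, h02345, h02346,
    h02356, h02456, h03456⟩ := h
  obtain ⟨M, hM⟩ : ∃ M : ℚ, M = (N : ℚ) + 1 := ⟨_, rfl⟩
  have hM0 : M ≠ 0 := hM ▸ Nat.cast_add_one_ne_zero N
  have hN : (N : ℚ) = M - 1 := by linarith
  have pieri := natCast_mul_mc (N + 1)
  have shift := mc_succ_seven N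
  rw [Nat.cast_add_one, ← hM] at pieri
  rw [← hM] at shift ⊢
  have k01237 : mc (N + 1) 0 1 2 3 7 = A := by
    rw [shift]
    simp only [Nat.reduceAdd, zero_add, mc_self_first, mc_self_second, mc_self_third,
      mc_self_fourth, hA, hN]
    ring
  have k01247 : mc (N + 1) 0 1 2 4 7 = -A := by
    rw [shift]
    simp only [Nat.reduceAdd, zero_add, mc_self_first, mc_self_second, mc_self_third,
      mc_self_fourth, hA, h01235, hN]
    ring
  have k01257 : mc (N + 1) 0 1 2 5 7 = (-2 / 3 * M ^ 2 + 1 / 3 * M + 1 / 3) * A := by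
    rw [shift]
    simp only [Nat.reduceAdd, zero_add, mc_self_first, mc_self_second, mc_self_third,
      mc_self_fourth, hA, h01235, h01236, hN]
    ring
  have k01347 : mc (N + 1) 0 1 3 4 7 = (2 / 3 * M ^ 2 - 1 / 3 * M + 2 / 3) * A := by
    rw [shift]
    simp only [Nat.reduceAdd, zero_add, mc_self_first, mc_self_second, mc_self_third,
      mc_self_fourth, hA, h01235, h01245, hN]
    ring
  have k01357 : mc (N + 1) 0 1 3 5 7 = (1 / 3 * M ^ 3 - 1 / 3) * A - B := by
    rw [shift]
    simp only [Nat.reduceAdd, zero_add, mc_self_first, mc_self_second, mc_self_third,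
      mc_self_fourth, hA, h01235, h01245, h01236, h01246, hN]
    ring
  have k01457 : mc (N + 1) 0 1 4 5 7 = (4 / 9 * M ^ 4 - 7 / 9 * M ^ 3 + 1 / 3 * M ^ 2 - 1 / 9 * M
      + 1 / 9) * A + 5 / 3 * B := by
    rw [shift]
    simp only [Nat.reduceAdd, zero_add, mc_self_first, mc_self_second, mc_self_third,
      mc_self_fourth, hA, h01245, h01246, h01256, hN]
    ring
  have k02347 : mc (N + 1) 0 2 3 4 7 = (-1 / 3 * M ^ 3 - 2 / 3 * M ^ 2 + 1 / 3 * M - 1 / 3) * A +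
      B := by
    rw [shift]
    simp only [Nat.reduceAdd, zero_add, mc_self_first, mc_self_second, mc_self_third,
      mc_self_fourth, hA, h01235, h01245, h01345, hN]
    ring
  have k02357 : mc (N + 1) 0 2 3 5 7 = (-4 / 9 * M ^ 4 + 1 / 9 * M ^ 3 + 1 / 3 * M ^ 2 - 2 / 9 * M
      + 2 / 9) * A + 1 / 3 * B := by
    rw [shift]
    simp only [Nat.reduceAdd, zero_add, mc_self_first, mc_self_second, mc_self_third,
      mc_self_fourth, hA, h01235, h01245, h01345, h01236, h01246, h01346, hN]
    ring
  have k02457 : mc (N + 1) 0 2 4 5 7 = (-2 / 9 * M ^ 5 + 1 / 9 * M ^ 4 + 4 / 9 * M ^ 3 - 4 / 9 * M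
      ^ 2 + 2 / 9 * M - 1 / 9) * A + (2 / 3 * M ^ 2 - M - 1) * B := by
    rw [shift]
    simp only [Nat.reduceAdd, zero_add, mc_self_first, mc_self_second, mc_self_third,
      mc_self_fourth, hA, h01245, h01345, h01246, h01346, h01256, h01356, hN]
    ring
  have k03457 : mc (N + 1) 0 3 4 5 7 = (-4 / 27 * M ^ 6 + 2 / 9 * M ^ 5 + 1 / 3 * M ^ 4 - 25 / 27
      * M ^ 3 + 7 / 9 * M ^ 2 - 1 / 3 * M + 2 / 27) * A + (-4 / 3 * M ^ 3 + 2 * M ^ 2 - 25 / 9 * M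
      + 2) * B := by
    rw [shift]
    simp only [Nat.reduceAdd, zero_add, mc_self_first, mc_self_second, mc_self_third,
      mc_self_fourth, hA, h01345, h01346, h01356, h01456, hN]
    ring
  have k12347 : mc (N + 1) 1 2 3 4 7 = (4 / 9 * M ^ 4 + 2 / 9 * M ^ 3 + 1 / 3 * M ^ 2 - 1 / 9 * M
      + 1 / 9) * A - 4 / 3 * B := by
    rw [shift]
    simp only [Nat.reduceAdd, zero_add, mc_self_first, mc_self_second, mc_self_third,
      mc_self_fourth, hA, h01235, h01245, h01345, h02345, hN]
    ring
  have k12357 : mc (N + 1) 1 2 3 5 7 = (4 / 9 * M ^ 5 - 2 / 9 * M ^ 4 + 1 / 9 * M ^ 3 - 4 / 9 * M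
      ^ 2 + 2 / 9 * M - 1 / 9) * A + (-4 / 3 * M ^ 2 + 2 * M - 1) * B := by
    rw [shift]
    simp only [Nat.reduceAdd, zero_add, mc_self_first, mc_self_second, mc_self_third,
      mc_self_fourth, hA, h01235, h01245, h01345, h02345, h01236, h01246, h01346, h02346, hN]
    ring
  have k12457 : mc (N + 1) 1 2 4 5 7 = (8 / 27 * M ^ 6 - 4 / 9 * M ^ 5 + 2 / 9 * M ^ 4 - 10 / 27 *
      M ^ 3 + 4 / 9 * M ^ 2 - 2 / 9 * M + 2 / 27) * A + (4 / 3 * M ^ 2 - 16 / 9 * M + 2) * B := by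
    rw [shift]
    simp only [Nat.reduceAdd, zero_add, mc_self_first, mc_self_second, mc_self_third,
      mc_self_fourth, hA, h01245, h01345, h02345, h01246, h01346, h02346, h01256, h01356, h02356,
      hN]
    ring
  have k13457 : mc (N + 1) 1 3 4 5 7 = (4 / 27 * M ^ 7 - 38 / 81 * M ^ 6 + 25 / 27 * M ^ 5 - 16 /
      9 * M ^ 4 + 193 / 81 * M ^ 3 - 49 / 27 * M ^ 2 + 20 / 27 * M - 11 / 81) * A + (-4 / 9 * M ^
      4 + 14 / 3 * M ^ 3 - 101 / 9 * M ^ 2 + 385 / 27 * M - 23 / 3) * B := by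
    rw [shift]
    simp only [Nat.reduceAdd, zero_add, mc_self_first, mc_self_second, mc_self_third,
      mc_self_fourth, hA, h01345, h02345, h01346, h02346, h01356, h02356, h01456, h02456, hN]
    ring
  have k23457 : mc (N + 1) 2 3 4 5 7 = (20 / 81 * M ^ 7 - 34 / 27 * M ^ 6 + 73 / 27 * M ^ 5 - 256
      / 81 * M ^ 4 + 58 / 27 * M ^ 3 - 22 / 27 * M ^ 2 + 11 / 81 * M) * A + (16 / 9 * M ^ 5 - 20 /
      3 * M ^ 4 + 14 * M ^ 3 - 439 / 27 * M ^ 2 + 23 / 3 * M) * B := by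
    rw [shift]
    simp only [Nat.reduceAdd, zero_add, mc_self_first, mc_self_second, mc_self_third,
      mc_self_fourth, hA, h02345, h02346, h02356, h02456, h03456, hN]
    ring
  have k23456 : mc (N + 1) 2 3 4 5 6 = (20 / 81 * M ^ 6 - 34 / 27 * M ^ 5 + 73 / 27 * M ^ 4 - 256
      / 81 * M ^ 3 + 58 / 27 * M ^ 2 - 22 / 27 * M + 11 / 81) * A + (16 / 9 * M ^ 4 - 20 / 3 * M ^
      3 + 14 * M ^ 2 - 439 / 27 * M + 23 / 3) * B := by
    have e := pieri 2 3 4 5 6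
    simp only [Nat.reduceAdd, zero_add, mc_self_first, mc_self_second, mc_self_third,
      mc_self_fourth] at e
    refine mul_left_cancel₀ (pow_ne_zero 1 hM0) ?_
    linear_combination e + k23457
  have k13456 : mc (N + 1) 1 3 4 5 6 = (4 / 27 * M ^ 6 - 2 / 9 * M ^ 5 - 1 / 3 * M ^ 4 + 25 / 27 *
      M ^ 3 - 7 / 9 * M ^ 2 + 1 / 3 * M - 2 / 27) * A + (4 / 3 * M ^ 3 - 2 * M ^ 2 + 25 / 9 * M -
      2) * B := by
    have e := pieri 1 3 4 5 6
    simp only [Nat.reduceAdd, zero_add, mc_self_first, mc_self_second, mc_self_third,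
      mc_self_fourth] at e
    refine mul_left_cancel₀ (pow_ne_zero 1 hM0) ?_
    linear_combination e + k23456 + k13457
  have k03456 : mc (N + 1) 0 3 4 5 6 = 0 := by
    have e := pieri 0 3 4 5 6
    simp only [Nat.reduceAdd, zero_add, mc_self_first, mc_self_second, mc_self_third,
      mc_self_fourth] at e
    refine mul_left_cancel₀ (pow_ne_zero 1 hM0) ?_
    linear_combination e + k13456 + k03457
  have k12456 : mc (N + 1) 1 2 4 5 6 = (4 / 9 * M ^ 5 - 2 / 3 * M ^ 4 - 1 / 9 * M ^ 3 + 5 / 9 * M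
      ^ 2 - 1 / 3 * M + 1 / 9) * A + (4 / 3 * M ^ 2 - 2 / 3 * M + 1) * B := by
    have e := pieri 1 2 4 5 6
    simp only [Nat.reduceAdd, zero_add, mc_self_first, mc_self_second, mc_self_third,
      mc_self_fourth] at e
    refine mul_left_cancel₀ (pow_ne_zero 1 hM0) ?_
    linear_combination e + k13456 + k12457
  have k02456 : mc (N + 1) 0 2 4 5 6 = (2 / 9 * M ^ 4 - 5 / 9 * M ^ 3 + 1 / 3 * M ^ 2 + 1 / 9 * M
      - 1 / 9) * A + (2 * M - 5 / 3) * B := by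
    have e := pieri 0 2 4 5 6
    simp only [Nat.reduceAdd, zero_add, mc_self_first, mc_self_second, mc_self_third,
      mc_self_fourth] at e
    refine mul_left_cancel₀ (pow_ne_zero 1 hM0) ?_
    linear_combination e + k12456 + k03456 + k02457
  have k12356 : mc (N + 1) 1 2 3 5 6 = (8 / 9 * M ^ 4 - 8 / 9 * M ^ 3 + 1 / 9 * M - 1 / 9) * A + 4
      / 3 * B := by
    have e := pieri 1 2 3 5 6
    simp only [Nat.reduceAdd, zero_add, mc_self_first, mc_self_second, mc_self_third,
      mc_self_fourth] at e
    refine mul_left_cancel₀ (pow_ne_zero 1 hM0) ?_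
    linear_combination e + k12456 + k12357
  have k01456 : mc (N + 1) 0 1 4 5 6 = (2 / 3 * M ^ 3 - 4 / 3 * M ^ 2 + 2 / 3 * M) * A + 2 * B :=
      by
    have e := pieri 0 1 4 5 6
    simp only [Nat.reduceAdd, zero_add, mc_self_first, mc_self_second, mc_self_third,
      mc_self_fourth] at e
    refine mul_left_cancel₀ (pow_ne_zero 1 hM0) ?_
    linear_combination e + k02456 + k01457
  have k02356 : mc (N + 1) 0 2 3 5 6 = (2 / 3 * M ^ 3 - 4 / 3 * M ^ 2 + 2 / 3 * M) * A + 2 * B :=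
      by
    have e := pieri 0 2 3 5 6
    simp only [Nat.reduceAdd, zero_add, mc_self_first, mc_self_second, mc_self_third,
      mc_self_fourth] at e
    refine mul_left_cancel₀ (pow_ne_zero 1 hM0) ?_
    linear_combination e + k12356 + k02456 + k02357
  have k12346 : mc (N + 1) 1 2 3 4 6 = (4 / 3 * M ^ 3 - 2 / 3 * M ^ 2 + 1 / 3 * M) * A := by
    have e := pieri 1 2 3 4 6
    simp only [Nat.reduceAdd, zero_add, mc_self_first, mc_self_second, mc_self_third,
      mc_self_fourth] at e
    refine mul_left_cancel₀ (pow_ne_zero 1 hM0) ?_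
    linear_combination e + k12356 + k12347
  have k01356 : M * mc (N + 1) 0 1 3 5 6 = (5 / 3 * M ^ 3 - 8 / 3 * M ^ 2 + 4 / 3 * M - 1 / 3) * A
      + 3 * B := by
    have e := pieri 0 1 3 5 6
    simp only [Nat.reduceAdd, zero_add, mc_self_first, mc_self_second, mc_self_third,
      mc_self_fourth] at e
    linear_combination e + k02356 + k01456 + k01357
  have k02346 : M * mc (N + 1) 0 2 3 4 6 = (5 / 3 * M ^ 3 - 8 / 3 * M ^ 2 + 4 / 3 * M - 1 / 3) * A
      + 3 * B := by
    have e := pieri 0 2 3 4 6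
    simp only [Nat.reduceAdd, zero_add, mc_self_first, mc_self_second, mc_self_third,
      mc_self_fourth] at e
    linear_combination e + k12346 + k02356 + k02347
  have k12345 : mc (N + 1) 1 2 3 4 5 = (4 / 3 * M ^ 2 - 2 / 3 * M + 1 / 3) * A := by
    have e := pieri 1 2 3 4 5
    simp only [Nat.reduceAdd, zero_add, mc_self_first, mc_self_second, mc_self_third,
      mc_self_fourth] at e
    refine mul_left_cancel₀ (pow_ne_zero 1 hM0) ?_
    linear_combination e + k12346
  have k01256 : M ^ 2 * mc (N + 1) 0 1 2 5 6 = (M ^ 3 - 7 / 3 * M ^ 2 + 5 / 3 * M - 1 / 3) * A + 3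
      * B := by
    have e := pieri 0 1 2 5 6
    simp only [Nat.reduceAdd, zero_add, mc_self_first, mc_self_second, mc_self_third,
      mc_self_fourth] at e
    linear_combination M ^ 1 * e + k01356 + M ^ 1 * k01257
  have k01346 : M ^ 2 * mc (N + 1) 0 1 3 4 6 = (4 * M ^ 3 - 17 / 3 * M ^ 2 + 10 / 3 * M - 2 / 3) *
      A + 6 * B := by
    have e := pieri 0 1 3 4 6
    simp only [Nat.reduceAdd, zero_add, mc_self_first, mc_self_second, mc_self_third,
      mc_self_fourth] at e
    linear_combination M ^ 1 * e + k02346 + k01356 + M ^ 1 * k01347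
  have k02345 : M ^ 2 * mc (N + 1) 0 2 3 4 5 = (3 * M ^ 3 - 10 / 3 * M ^ 2 + 5 / 3 * M - 1 / 3) *
      A + 3 * B := by
    have e := pieri 0 2 3 4 5
    simp only [Nat.reduceAdd, zero_add, mc_self_first, mc_self_second, mc_self_third,
      mc_self_fourth] at e
    linear_combination M ^ 1 * e + M ^ 1 * k12345 + k02346
  have k01246 : M ^ 3 * mc (N + 1) 0 1 2 4 6 = (5 * M ^ 3 - 9 * M ^ 2 + 5 * M - 1) * A + 9 * B :=
      by
    have e := pieri 0 1 2 4 6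
    simp only [Nat.reduceAdd, zero_add, mc_self_first, mc_self_second, mc_self_third,
      mc_self_fourth] at e
    linear_combination M ^ 2 * e + k01346 + k01256 + M ^ 2 * k01247
  have k01345 : M ^ 3 * mc (N + 1) 0 1 3 4 5 = (7 * M ^ 3 - 9 * M ^ 2 + 5 * M - 1) * A + 9 * B :=
      by
    have e := pieri 0 1 3 4 5
    simp only [Nat.reduceAdd, zero_add, mc_self_first, mc_self_second, mc_self_third,
      mc_self_fourth] at e
    linear_combination M ^ 2 * e + k02345 + k01346
  have k01236 : M ^ 4 * mc (N + 1) 0 1 2 3 6 = (6 * M ^ 3 - 9 * M ^ 2 + 5 * M - 1) * A + 9 * B :=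
      by
    have e := pieri 0 1 2 3 6
    simp only [Nat.reduceAdd, zero_add, mc_self_first, mc_self_second, mc_self_third,
      mc_self_fourth] at e
    linear_combination M ^ 3 * e + k01246 + M ^ 3 * k01237
  have k01245 : M ^ 4 * mc (N + 1) 0 1 2 4 5 = (12 * M ^ 3 - 18 * M ^ 2 + 10 * M - 2) * A + 18 * B
      := by
    have e := pieri 0 1 2 4 5
    simp only [Nat.reduceAdd, zero_add, mc_self_first, mc_self_second, mc_self_third,
      mc_self_fourth] at e
    linear_combination M ^ 3 * e + k01345 + k01246
  have k01235 : M ^ 5 * mc (N + 1) 0 1 2 3 5 = (18 * M ^ 3 - 27 * M ^ 2 + 15 * M - 3) * A + 27 * B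
      := by
    have e := pieri 0 1 2 3 5
    simp only [Nat.reduceAdd, zero_add, mc_self_first, mc_self_second, mc_self_third,
      mc_self_fourth] at e
    linear_combination M ^ 4 * e + k01245 + k01236
  have k01234 : M ^ 6 * mc (N + 1) 0 1 2 3 4 = (18 * M ^ 3 - 27 * M ^ 2 + 15 * M - 3) * A + 27 * B
      := by
    have e := pieri 0 1 2 3 4
    simp only [Nat.reduceAdd, zero_add, mc_self_first, mc_self_second, mc_self_third,
      mc_self_fourth] at e
    linear_combination M ^ 5 * e + k01235
  rw [hA'] at k01234
  refine ⟨⟨?_, ?_, ?_, ?_, ?_, ?_, ?_, ?_, ?_, ?_, ?_, ?_, ?_, ?_⟩, k01234⟩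
  · refine mul_left_cancel₀ (pow_ne_zero 5 hM0) ?_
    linear_combination k01235 - (1) * k01234
  · refine mul_left_cancel₀ (pow_ne_zero 4 hM0) ?_
    linear_combination k01236 - (1 / 3) * k01234
  · refine mul_left_cancel₀ (pow_ne_zero 4 hM0) ?_
    linear_combination k01245 - (2 / 3) * k01234
  · refine mul_left_cancel₀ (pow_ne_zero 3 hM0) ?_
    linear_combination k01246 - (1 / 3) * k01234
  · refine mul_left_cancel₀ (pow_ne_zero 2 hM0) ?_
    linear_combination k01256 - (1 / 9) * k01234
  · refine mul_left_cancel₀ (pow_ne_zero 3 hM0) ?_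
    linear_combination k01345 - (1 / 3) * k01234
  · refine mul_left_cancel₀ (pow_ne_zero 2 hM0) ?_
    linear_combination k01346 - (2 / 9) * k01234
  · refine mul_left_cancel₀ (pow_ne_zero 1 hM0) ?_
    linear_combination k01356 - (1 / 9) * k01234
  · linear_combination k01456 - (2 / 27) * k01234
  · refine mul_left_cancel₀ (pow_ne_zero 2 hM0) ?_
    linear_combination k02345 - (1 / 9) * k01234
  · refine mul_left_cancel₀ (pow_ne_zero 1 hM0) ?_
    linear_combination k02346 - (1 / 9) * k01234
  · linear_combination k02356 - (2 / 27) * k01234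
  · linear_combination k02456 - (2 / 27 * M - 5 / 81) * k01234
  · linear_combination k03456

theorem mc_zero (c : Fin 5 → ℕ) :
    PowerSeries.coeff 0 (minor 0 c) =
      (Matrix.of fun i j : Fin 5 => if (i : ℕ) = c j then (1 : ℚ) else 0).det := by
  rw [PowerSeries.coeff_zero_eq_constantCoeff_apply, minor, RingHom.map_det]
  congr 1
  ext1 i j
  simp [entry, factor, ← PowerSeries.coeff_zero_eq_constantCoeff_apply, PowerSeries.coeff_X_pow]

theorem mc_zero_first : mc 0 0 1 2 3 4 = 1 := by
  rw [mc, mc_zero]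
  refine (congrArg Matrix.det ?_).trans (Matrix.det_one (n := Fin 5))
  ext1 i j
  fin_cases i <;> fin_cases j <;> rfl

theorem mc_zero_of_five_le {a b c d e : ℕ} (h : 5 ≤ e) : mc 0 a b c d e = 0 := by
  rw [mc, mc_zero]
  refine Matrix.det_eq_zero_of_column_eq_zero 4 fun i => ?_
  have : (i : ℕ) ≠ e := by omega
  simp [this]

theorem relations_zero : Relations 0 (0 : ℕ) 1 0 := by
  constructor <;> rw [mc_zero_of_five_le (by norm_num)] <;> norm_num

theorem relations_succ_self (N : ℕ) :
    Relations (N + 1) ((N : ℚ) + 1) (mc (N + 1) 0 1 2 3 4) (mc N 0 1 2 3 4) := by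
  induction N with
  | zero =>
    rw [mc_zero_first]
    exact (relations_succ relations_zero mc_zero_first rfl).1
  | succ N ih =>
    rw [← Nat.cast_add_one] at ih
    exact (relations_succ ih rfl rfl).1

theorem mc_one : mc 1 0 1 2 3 4 = 3 := by
  have h := (relations_succ relations_zero mc_zero_first rfl).2
  norm_num at h
  exact h

theorem mc_add_two (N : ℕ) :
    ((N : ℚ) + 2) ^ 6 * mc (N + 2) 0 1 2 3 4 =
      (18 * ((N : ℚ) + 2) ^ 3 - 27 * ((N : ℚ) + 2) ^ 2 + 15 * ((N : ℚ) + 2) - 3) *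
        mc (N + 1) 0 1 2 3 4 + 27 * mc N 0 1 2 3 4 := by
  have ih := relations_succ_self N
  rw [← Nat.cast_add_one] at ih
  have h := (relations_succ ih rfl rfl).2
  push_cast at h
  rw [add_assoc, one_add_one_eq_two] at h
  exact h

/-- The exponent vector `(σ 0, …, σ 4)`. -/
def expo (σ : Equiv.Perm (Fin 5)) : Fin 5 →₀ ℕ := Finsupp.equivFunOnFinite.symm fun i => (σ i : ℕ)

theorem expo_apply (σ : Equiv.Perm (Fin 5)) (i : Fin 5) : expo σ i = σ i := rfl

theorem expo_le_iff {σ τ : Equiv.Perm (Fin 5)} : expo τ ≤ expo σ ↔ τ = σ := by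
  refine ⟨fun h => ?_, fun h => h ▸ le_rfl⟩
  have hsum : ∑ i, (τ i : ℕ) = ∑ i, (σ i : ℕ) := by
    rw [Equiv.sum_comp τ fun i : Fin 5 => (i : ℕ), Equiv.sum_comp σ fun i : Fin 5 => (i : ℕ)]
  have heq := (Finset.sum_eq_sum_iff_of_le fun i _ => h i).1 hsum
  exact Equiv.ext fun i => Fin.ext (heq i (Finset.mem_univ i))

/-- The alternating sum of the coefficients of the monomials of the Vandermonde determinant. -/
def altCoeff : R →ₗ[ℚ] ℚ :=
  ∑ σ : Equiv.Perm (Fin 5), ((Equiv.Perm.sign σ : ℤ) : ℚ) • MvPowerSeries.coeff (expo σ)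

theorem altCoeff_apply (f : R) : altCoeff f =
    ∑ σ : Equiv.Perm (Fin 5), ((Equiv.Perm.sign σ : ℤ) : ℚ) * MvPowerSeries.coeff (expo σ) f := by
  simp [altCoeff]

theorem coeff_X_mul (m : Fin 5 →₀ ℕ) (i : Fin 5) (f : R) :
    MvPowerSeries.coeff m (MvPowerSeries.X i * f) =
      if m i = 0 then 0 else MvPowerSeries.coeff (m - Finsupp.single i 1) f := by
  rw [MvPowerSeries.X, MvPowerSeries.coeff_monomial_mul, one_mul]
  simp only [Finsupp.single_le_iff, Nat.one_le_iff_ne_zero, ite_not]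

theorem altCoeff_sum_X_mul (f : R) : altCoeff ((∑ i, MvPowerSeries.X i) * f) = 0 := by
  have hcoeff : ∀ σ : Equiv.Perm (Fin 5),
      MvPowerSeries.coeff (expo σ) ((∑ i, MvPowerSeries.X i) * f) =
        ∑ v : Fin 5, if v = 0 then 0 else
          MvPowerSeries.coeff (expo σ - Finsupp.single (σ.symm v) 1) f := fun σ => by
    rw [Finset.sum_mul, map_sum, ← Equiv.sum_comp σ.symm]
    refine Finset.sum_congr rfl fun v _ => ?_
    rw [coeff_X_mul, expo_apply, Equiv.apply_symm_apply]
    simp only [Fin.val_eq_zero_iff]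
  simp only [altCoeff_apply, hcoeff, Finset.mul_sum]
  rw [Finset.sum_comm]
  refine Finset.sum_eq_zero fun v _ => ?_
  by_cases hv : v = 0
  · simp [hv]
  simp only [if_neg hv]
  have hv' : (v : ℕ) ≠ 0 := fun h => hv (Fin.ext h)
  set w : Fin 5 := ⟨v - 1, by omega⟩ with hw
  have hne : v ≠ w := fun h => by
    have := congrArg Fin.val h
    simp only [hw] at this
    omega
  have hflip : ∀ σ : Equiv.Perm (Fin 5),
      expo (Equiv.swap v w * σ) - Finsupp.single ((Equiv.swap v w * σ).symm v) 1 =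
        expo σ - Finsupp.single (σ.symm v) 1 := fun σ => by
    ext i
    have hsymm : (Equiv.swap v w * σ).symm v = σ.symm w := by
      rw [Equiv.symm_apply_eq]
      simp
    rw [hsymm]
    simp only [Finsupp.tsub_apply, Finsupp.single_apply, expo_apply, Equiv.symm_apply_eq,
      Equiv.Perm.mul_apply, Equiv.swap_apply_def]
    by_cases h₁ : σ i = v
    · simp only [h₁, hne, if_true, if_false, hne.symm]
      simp [hw]
    · by_cases h₂ : σ i = w
      · simp only [h₂, hne, hne.symm, if_true, if_false]
        simp only [hw]
        omega
      · simp [h₁, h₂, Ne.symm h₁, Ne.symm h₂]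
  have h := Equiv.sum_comp (Equiv.mulLeft (Equiv.swap v w)) fun σ : Equiv.Perm (Fin 5) =>
    ((Equiv.Perm.sign σ : ℤ) : ℚ) *
      MvPowerSeries.coeff (expo σ - Finsupp.single (σ.symm v) 1) f
  simp only [Equiv.coe_mulLeft, hflip, Equiv.Perm.sign_mul, Equiv.Perm.sign_swap hne, neg_mul,
    one_mul, Units.val_neg, Int.cast_neg, Finset.sum_neg_distrib] at h
  linarith

theorem prod_pairs_sub {S : Type*} [CommRing S] (y : Fin 5 → S) :
    ∏ p ∈ pairs, (y p.1 - y p.2) =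
      ∑ σ : Equiv.Perm (Fin 5), ((Equiv.Perm.sign σ : ℤ) : S) * ∏ i, y i ^ (σ i : ℕ) := by
  have h := Matrix.det_vandermonde y
  rw [← Matrix.det_transpose, Matrix.det_apply'] at h
  simp only [Matrix.transpose_apply, Matrix.vandermonde_apply] at h
  rw [h]
  have hp : pairs = {(0, 1), (0, 2), (0, 3), (0, 4), (1, 2), (1, 3), (1, 4), (2, 3), (2, 4),
      (3, 4)} := by
    decide
  have h0 : Finset.Ioi (0 : Fin 5) = {1, 2, 3, 4} := by decide
  have h1 : Finset.Ioi (1 : Fin 5) = {2, 3, 4} := by decide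
  have h2 : Finset.Ioi (2 : Fin 5) = {3, 4} := by decide
  have h3 : Finset.Ioi (3 : Fin 5) = {4} := by decide
  have h4 : Finset.Ioi (4 : Fin 5) = ∅ := by decide
  rw [hp, Fin.prod_univ_five, h0, h1, h2, h3, h4]
  simp
  ring

theorem prod_X_pow (σ : Equiv.Perm (Fin 5)) :
    ∏ i, (MvPowerSeries.X i : R) ^ (σ i : ℕ) = MvPowerSeries.monomial (expo σ) 1 := by
  simp only [MvPowerSeries.X_pow_eq]
  rw [MvPowerSeries.prod_monomial, Finset.prod_const_one]
  exact congrArg (MvPowerSeries.monomial · 1) (Finsupp.univ_sum_single (expo σ))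

theorem Vand_eq_sum : Vand = ∑ σ : Equiv.Perm (Fin 5),
    MvPowerSeries.monomial (expo σ) ((Equiv.Perm.sign σ : ℤ) : ℚ) := by
  rw [Vand, prod_pairs_sub]
  refine Finset.sum_congr rfl fun σ _ => ?_
  rw [prod_X_pow, ← map_intCast (MvPowerSeries.C (σ := Fin 5) (R := ℚ)),
    ← MvPowerSeries.smul_eq_C_mul, ← map_smul, smul_eq_mul, mul_one]

theorem altCoeff_Vand_mul (g : R) : altCoeff (Vand * g) = 120 * MvPowerSeries.constantCoeff g := by
  have h : ∀ σ : Equiv.Perm (Fin 5), MvPowerSeries.coeff (expo σ) (Vand * g) =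
      ((Equiv.Perm.sign σ : ℤ) : ℚ) * MvPowerSeries.constantCoeff g := fun σ => by
    rw [Vand_eq_sum, Finset.sum_mul, map_sum]
    simp only [MvPowerSeries.coeff_monomial_mul, expo_le_iff]
    rw [Finset.sum_ite_eq' Finset.univ σ]
    simp
  simp only [altCoeff_apply, h, ← mul_assoc, ← Int.cast_mul, Int.units_coe_mul_self]
  simp [Fintype.card_perm, Nat.factorial]

/-- The inclusion of power series in the variable `xᵢ` into `ℚ[[x₁,…,x₅]]`. -/
def iota (i : Fin 5) : PowerSeries ℚ →ₐ[ℚ] R := MvPowerSeries.rename fun _ : Unit => i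

theorem iota_X (i : Fin 5) : iota i PowerSeries.X = MvPowerSeries.X i :=
  MvPowerSeries.rename_X _ _

theorem iota_C (i : Fin 5) (r : ℚ) : iota i (PowerSeries.C r) = Cc r :=
  MvPowerSeries.rename_C _ _

theorem coeff_single_iota (i : Fin 5) (h : PowerSeries ℚ) (k : ℕ) :
    MvPowerSeries.coeff (Finsupp.single i k) (iota i h) = PowerSeries.coeff k h := by
  have := MvPowerSeries.coeff_embDomain_rename ⟨fun _ : Unit => i, fun _ _ _ => rfl⟩ h
    (Finsupp.single () k)
  rwa [Finsupp.embDomain_single] at this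

theorem coeff_iota_eq_zero (i : Fin 5) (h : PowerSeries ℚ) {m : Fin 5 →₀ ℕ}
    (hm : ∀ k, m ≠ Finsupp.single i k) : MvPowerSeries.coeff m (iota i h) = 0 := by
  refine MvPowerSeries.coeff_rename_eq_zero _ h ?_
  rintro ⟨x, rfl⟩
  refine hm (x ()) ?_
  conv_lhs => rw [Finsupp.unique_single x]
  exact Finsupp.mapDomain_single

theorem coeff_prod_iota (h : Fin 5 → PowerSeries ℚ) (e : Fin 5 →₀ ℕ) :
    MvPowerSeries.coeff e (∏ i, iota i (h i)) = ∏ i, PowerSeries.coeff (e i) (h i) := by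
  rw [MvPowerSeries.coeff_prod, Finset.sum_eq_single
    (Finsupp.equivFunOnFinite.symm fun i => Finsupp.single i (e i))]
  · exact Finset.prod_congr rfl fun i _ => coeff_single_iota i (h i) (e i)
  · intro l hl hne
    by_contra h0
    refine hne ?_
    have hl' : ∀ i, ∃ k, l i = Finsupp.single i k := fun i => by
      by_contra! hk
      exact h0 (Finset.prod_eq_zero (Finset.mem_univ i) (coeff_iota_eq_zero i (h i) hk))
    choose k hk using hl'
    have hsum : ∑ i, l i = e := (Finset.mem_finsuppAntidiag.1 hl).1
    simp only [hk] at hsum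
    have hke : ∀ i, k i = e i := fun i => by
      rw [← hsum]
      simp [Finsupp.finsetSum_apply, Finsupp.single_apply]
    ext1 i
    rw [hk, hke]
    rfl
  · intro hl
    refine absurd (Finset.mem_finsuppAntidiag.2 ⟨?_, Finset.subset_univ _⟩) hl
    exact Finsupp.univ_sum_single e

theorem coeff_prod_eq_sum_filter (N : ℕ) (f : Fin 5 → PowerSeries ℚ) :
    PowerSeries.coeff N (∏ i, f i) =
      ∑ d ∈ (Fintype.piFinset fun _ : Fin 5 => Finset.range (N + 1)).filter
        (fun d => ∑ j, d j = N), ∏ i, PowerSeries.coeff (d i) (f i) := by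
  rw [PowerSeries.coeff_prod]
  refine Finset.sum_bij' (fun l _ => ⇑l) (fun d _ => Finsupp.equivFunOnFinite.symm d)
    ?_ ?_ ?_ ?_ ?_
  · intro l hl
    have hsum := (Finset.mem_finsuppAntidiag.1 hl).1
    refine Finset.mem_filter.2 ⟨Fintype.mem_piFinset.2 fun i => ?_, hsum⟩
    have := Finset.single_le_sum (f := l) (fun _ _ => Nat.zero_le _) (Finset.mem_univ i)
    exact Finset.mem_range_succ_iff.2 (this.trans hsum.le)
  · intro d hd
    exact Finset.mem_finsuppAntidiag.2 ⟨(Finset.mem_filter.1 hd).2, Finset.subset_univ _⟩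
  · intro l _
    ext
    rfl
  · intro d _
    rfl
  · intro l _
    rfl

/-- The term `T_d` with `x₁ + ⋯ + x₅` set to zero, up to a scalar. -/
def reducedT (N : ℕ) (d : Fin 5 → ℕ) : R :=
  (∏ p ∈ pairs,
      (MvPowerSeries.X p.1 - MvPowerSeries.X p.2 + Cc ((d p.1 : ℚ) - (d p.2 : ℚ)))) *
    ∏ i, iota i (factor N (d i))

theorem reducedT_eq_sum (N : ℕ) (d : Fin 5 → ℕ) :
    reducedT N d = ∑ τ : Equiv.Perm (Fin 5), ((Equiv.Perm.sign τ : ℤ) : ℚ) •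
      ∏ i, iota i ((PowerSeries.X + PowerSeries.C (d i : ℚ)) ^ (τ i : ℕ) * factor N (d i)) := by
  have h : ∏ p ∈ pairs,
      (MvPowerSeries.X p.1 - MvPowerSeries.X p.2 + Cc ((d p.1 : ℚ) - (d p.2 : ℚ))) =
      ∏ p ∈ pairs, ((fun i : Fin 5 => iota i (PowerSeries.X + PowerSeries.C (d i : ℚ))) p.1 -
        (fun i : Fin 5 => iota i (PowerSeries.X + PowerSeries.C (d i : ℚ))) p.2) := by
    refine Finset.prod_congr rfl fun p _ => ?_
    simp only [map_add, iota_X, iota_C, Cc, map_sub]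
    ring
  rw [reducedT, h, prod_pairs_sub fun i : Fin 5 => iota i (PowerSeries.X + PowerSeries.C (d i : ℚ)),
    Finset.sum_mul]
  refine Finset.sum_congr rfl fun τ _ => ?_
  rw [mul_assoc, ← Finset.prod_mul_distrib, Int.cast_smul_eq_zsmul, zsmul_eq_mul]
  simp only [map_mul, map_pow]

theorem altCoeff_sum_reducedT (N : ℕ) :
    altCoeff (∑ d ∈ (Fintype.piFinset fun _ : Fin 5 => Finset.range (N + 1)).filter
        (fun d => ∑ j, d j = N), reducedT N d) = 120 * mc N 0 1 2 3 4 := by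
  have hcoeff : ∀ σ : Equiv.Perm (Fin 5), MvPowerSeries.coeff (expo σ)
      (∑ d ∈ (Fintype.piFinset fun _ : Fin 5 => Finset.range (N + 1)).filter
        (fun d => ∑ j, d j = N), reducedT N d) =
      ((Equiv.Perm.sign σ : ℤ) : ℚ) * mc N 0 1 2 3 4 := fun σ => by
    set A : Matrix (Fin 5) (Fin 5) (PowerSeries ℚ) := Matrix.of fun i j => entry N i j with hA
    have hmc : mc N 0 1 2 3 4 = PowerSeries.coeff N A.det := by
      refine congrArg (fun B : Matrix (Fin 5) (Fin 5) (PowerSeries ℚ) =>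
        PowerSeries.coeff N B.det) ?_
      ext1 i j
      fin_cases j <;> rfl
    have hdet : ((Equiv.Perm.sign σ : ℤ) : ℚ) * PowerSeries.coeff N A.det =
        PowerSeries.coeff N ((A.submatrix σ id).transpose).det := by
      rw [Matrix.det_transpose, Matrix.det_permute, ← PowerSeries.coeff_C_mul, map_intCast]
    rw [hmc, hdet, Matrix.det_apply', map_sum, map_sum]
    simp only [reducedT_eq_sum, map_sum, map_smul, coeff_prod_iota, smul_eq_mul]
    rw [Finset.sum_comm]
    refine Finset.sum_congr rfl fun τ _ => ?_
    rw [← Finset.mul_sum, ← map_intCast (PowerSeries.C (R := ℚ)), PowerSeries.coeff_C_mul,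
      coeff_prod_eq_sum_filter]
    refine congrArg _ (Finset.sum_congr rfl fun d _ => Finset.prod_congr rfl fun i _ => ?_)
    simp [hA, entry, expo_apply]
  simp only [altCoeff_apply, hcoeff, ← mul_assoc, ← Int.cast_mul, Int.units_coe_mul_self]
  simp [Fintype.card_perm, Nat.factorial]

theorem prod_Icc_Cc (k : ℕ) : ∏ m ∈ Finset.Icc 1 k, (0 + Cc (m : ℚ)) = Cc (k.factorial : ℚ) := by
  induction k with
  | zero => simp [Cc]
  | succ k ih =>
    rw [Finset.prod_Icc_succ_top (by omega), ih, Nat.factorial_succ, Nat.cast_mul, Cc, Cc, Cc,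
      zero_add, ← map_mul, mul_comm]

theorem inv_prod_iota (v : Fin 5 → PowerSeries ℚ)
    (hv : ∀ i, PowerSeries.constantCoeff (v i) ≠ 0) :
    (∏ i, iota i (v i))⁻¹ = ∏ i, iota i (v i)⁻¹ := by
  rw [MvPowerSeries.inv_eq_iff_mul_eq_one, ← Finset.prod_mul_distrib]
  · refine Finset.prod_eq_one fun i _ => ?_
    rw [← map_mul, PowerSeries.inv_mul_cancel _ (hv i), map_one]
  · rw [map_prod]
    refine Finset.prod_ne_zero_iff.2 fun i _ => ?_
    rw [iota, MvPowerSeries.constantCoeff_rename]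
    exact hv i

theorem sum_X_dvd_T_sub {N : ℕ} {d : Fin 5 → ℕ} (hd : ∑ j, d j = N) :
    (∑ i, MvPowerSeries.X i : R) ∣
      T d - Cc (N.factorial * (2 * N).factorial : ℚ) * reducedT N d := by
  rw [← Ideal.mem_span_singleton, ← Ideal.Quotient.eq]
  set π := Ideal.Quotient.mk (Ideal.span {(∑ i, MvPowerSeries.X i : R)})
  have key : ∀ (w : Fin 5 → ℕ) (y : R) (k : ℕ), ∑ j, w j * d j = k →
      (∑ i, MvPowerSeries.X i : R) ∣ (∑ j, Cc (w j : ℚ) * MvPowerSeries.X j) - y →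
      π (∏ m ∈ Finset.Icc 1 (∑ j, w j * d j),
        ((∑ j, Cc (w j : ℚ) * MvPowerSeries.X j) + Cc (m : ℚ))) =
      π (∏ m ∈ Finset.Icc 1 k, (y + Cc (m : ℚ))) := fun w y k hk hy => by
    rw [hk, map_prod, map_prod]
    refine Finset.prod_congr rfl fun m _ => ?_
    rw [map_add, map_add, Ideal.Quotient.eq.2 (Ideal.mem_span_singleton.2 hy)]
  have hu : (∏ j, ∏ m ∈ Finset.Icc 1 (d j), (MvPowerSeries.X j + Cc (m : ℚ)) ^ n)⁻¹ =
      ∏ j, iota j (∏ m ∈ Finset.Icc 1 (d j),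
        (PowerSeries.X + PowerSeries.C (m : ℚ)) ^ 7)⁻¹ := by
    rw [← inv_prod_iota]
    · simp only [map_prod, map_pow, map_add, iota_X, iota_C, n]
    · intro i
      rw [map_prod]
      refine Finset.prod_ne_zero_iff.2 fun m hm => ?_
      have := (Finset.mem_Icc.1 hm).1
      simp
      omega
  have hle : ∀ i, d i ≤ N := fun i => hd ▸
    Finset.single_le_sum (f := d) (fun _ _ => Nat.zero_le _) (Finset.mem_univ i)
  have hf : ∀ i, iota i (factor N (d i)) =
      (∏ m ∈ Finset.Icc 1 (N - d i), (-MvPowerSeries.X i + Cc (m : ℚ))) *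
        iota i (∏ m ∈ Finset.Icc 1 (d i),
          (PowerSeries.X + PowerSeries.C (m : ℚ)) ^ 7)⁻¹ := fun i => by
    rw [factor, if_pos (hle i), map_mul, map_prod]
    refine congrArg (· * _) (Finset.prod_congr rfl fun m _ => ?_)
    rw [map_sub, iota_X, iota_C, sub_eq_neg_add]
  rw [Fin.sum_univ_five] at hd
  rw [T, hu]
  simp only [ws, List.map_cons, List.prod_cons, List.map_nil, List.prod_nil, map_mul]
  rw [key _ (-MvPowerSeries.X 0) (N - d 0), key _ (-MvPowerSeries.X 1) (N - d 1),
    key _ (-MvPowerSeries.X 2) (N - d 2), key _ (-MvPowerSeries.X 3) (N - d 3),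
    key _ (-MvPowerSeries.X 4) (N - d 4), key _ 0 N, key _ 0 (2 * N), prod_Icc_Cc, prod_Icc_Cc]
  · simp only [← map_mul]
    congr 1
    simp only [reducedT, hf, Fin.prod_univ_five, Cc, map_mul]
    ring
  all_goals simp only [Fin.sum_univ_five]
  all_goals simp [Cc]
  all_goals first
    | omega
    | exact ⟨1, by ring1⟩
    | exact ⟨MvPowerSeries.C 2, by ring1⟩

theorem constantCoeff_of_F_eq {N : ℕ} {g : R} (h : F N = Vand * g) :
    MvPowerSeries.constantCoeff g = N.factorial * (2 * N).factorial * mc N 0 1 2 3 4 := by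
  have hT : ∀ d ∈ (Fintype.piFinset fun _ : Fin 5 => Finset.range (N + 1)).filter
      (fun d => ∑ j, d j = N),
      altCoeff (T d) = (N.factorial * (2 * N).factorial : ℚ) * altCoeff (reducedT N d) := by
    intro d hd
    obtain ⟨E, hE⟩ := sum_X_dvd_T_sub (Finset.mem_filter.1 hd).2
    rw [sub_eq_iff_eq_add'.1 hE, map_add, altCoeff_sum_X_mul, add_zero, Cc,
      ← MvPowerSeries.smul_eq_C_mul, map_smul, smul_eq_mul]
  have h₁ := altCoeff_Vand_mul g
  rw [← h, F, map_sum, Finset.sum_congr rfl hT, ← Finset.mul_sum, ← map_sum,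
    altCoeff_sum_reducedT] at h₁
  linarith

section

open MvPolynomial

variable {K ι : Type*} [Field K]

theorem X_sub_X_dvd_of_rename_swap_eq_neg [CharZero K] [DecidableEq ι] {i j : ι}
    {p : MvPolynomial ι K} (hp : rename (Equiv.swap i j) p = -p) :
    (X i - X j : MvPolynomial ι K) ∣ p := by
  set π := Ideal.Quotient.mkₐ K (Ideal.span {(X i - X j : MvPolynomial ι K)})
  have hij : π (X i) = π (X j) :=
    Ideal.Quotient.eq.2 (Ideal.mem_span_singleton_self _)
  have hπ : π.comp (rename (Equiv.swap i j)) = π := by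
    refine algHom_ext fun k => ?_
    rw [AlgHom.comp_apply, rename_X, Equiv.swap_apply_def]
    split_ifs with h₁ h₂
    · rw [h₁, hij]
    · rw [h₂, hij]
    · rfl
  have h := DFunLike.congr_fun hπ p
  rw [AlgHom.comp_apply, hp] at h
  have hmem : (X i - X j : MvPolynomial ι K) ∣ p - -p :=
    Ideal.mem_span_singleton.1 (Ideal.Quotient.eq.1 h.symm)
  have h2 : p = C (1 / 2 : K) * (p - -p) := by
    have : (C (1 / 2 : K) * 2 : MvPolynomial ι K) = 1 := by
      rw [← map_ofNat (C : K →+* MvPolynomial ι K) 2, ← map_mul]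
      norm_num
    linear_combination -p * this
  rw [h2]
  exact hmem.mul_left _

theorem X_sub_X_dvd_iff [DecidableEq ι] {i j : ι} {p : MvPolynomial ι K} :
    (X i - X j : MvPolynomial ι K) ∣ p ↔ rename (Function.update id j i) p = 0 := by
  refine ⟨?_, fun hp => ?_⟩
  · rintro ⟨q, rfl⟩
    by_cases h : i = j
    · simp [h]
    · simp [Function.update_of_ne h]
  · set π := Ideal.Quotient.mkₐ K (Ideal.span {(X i - X j : MvPolynomial ι K)})
    have hij : π (X i) = π (X j) :=
      Ideal.Quotient.eq.2 (Ideal.mem_span_singleton_self _)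
    have hπ : π.comp (rename (Function.update id j i)) = π := by
      refine algHom_ext fun k => ?_
      rw [AlgHom.comp_apply, rename_X]
      by_cases h : k = j
      · rw [h, Function.update_self, hij]
      · rw [Function.update_of_ne h, id]
    have h := DFunLike.congr_fun hπ p
    rw [AlgHom.comp_apply, hp, map_zero] at h
    exact Ideal.mem_span_singleton.1 (Ideal.Quotient.eq_zero_iff_mem.1 h.symm)

theorem prime_X_sub_X {i j : ι} (h : i ≠ j) : Prime (X i - X j : MvPolynomial ι K) := by
  classical
  rw [← Ideal.span_singleton_prime (sub_ne_zero.2 fun e => h (X_injective e))]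
  have : Ideal.span {(X i - X j : MvPolynomial ι K)} =
      RingHom.ker (rename (R := K) (Function.update id j i)) := by
    ext p
    rw [Ideal.mem_span_singleton, X_sub_X_dvd_iff, RingHom.mem_ker]
  rw [this]
  exact RingHom.ker_isPrime _

end

theorem prod_pairs_dvd_of_rename_swap_eq_neg {p : MvPolynomial (Fin 5) ℚ}
    (hp : ∀ i j : Fin 5, i ≠ j → MvPolynomial.rename (Equiv.swap i j) p = -p) :
    (∏ q ∈ pairs, (MvPolynomial.X q.1 - MvPolynomial.X q.2)) ∣ p := by
  have hpairs : ∀ q ∈ pairs, q.1 < q.2 := fun q hq => (Finset.mem_filter.1 hq).2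
  refine Finset.prod_dvd_of_isRelPrime (fun q hq r hr hne => ?_) fun q hq =>
    X_sub_X_dvd_of_rename_swap_eq_neg (hp _ _ (hpairs q hq).ne)
  have hq' := hpairs q hq
  have hr' := hpairs r hr
  refine (prime_X_sub_X hq'.ne).irreducible.isRelPrime_iff_not_dvd.2 ?_
  rw [X_sub_X_dvd_iff, map_sub, MvPolynomial.rename_X, MvPolynomial.rename_X,
    sub_eq_zero, MvPolynomial.X_injective.eq_iff, Function.update_apply, Function.update_apply]
  intro h
  refine hne (Prod.ext ?_ ?_) <;> split_ifs at h <;> simp only [id] at h <;> grind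

/-- The homogeneous part of degree `m` of a power series. -/
def homPart (m : ℕ) (f : R) : MvPolynomial (Fin 5) ℚ :=
  ∑ e ∈ Finset.finsuppAntidiag Finset.univ m, MvPolynomial.monomial e (MvPowerSeries.coeff e f)

theorem coeff_homPart (m : ℕ) (f : R) (e : Fin 5 →₀ ℕ) :
    (homPart m f).coeff e = if e.degree = m then MvPowerSeries.coeff e f else 0 := by
  rw [homPart, MvPolynomial.coeff_sum]
  simp only [MvPolynomial.coeff_monomial]
  rw [Finset.sum_ite_eq']
  simp [Finset.mem_finsuppAntidiag, Finsupp.degree_eq_sum]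

theorem rename_homPart (m : ℕ) {f : R} {σ : Equiv.Perm (Fin 5)}
    (hf : MvPowerSeries.rename σ f = -f) :
    MvPolynomial.rename σ (homPart m f) = -homPart m f := by
  ext e
  obtain ⟨e, rfl⟩ : ∃ x, Finsupp.mapDomain σ x = e :=
    ⟨Finsupp.mapDomain σ.symm e, by
      rw [← Finsupp.mapDomain_comp, Equiv.self_comp_symm, Finsupp.mapDomain_id]⟩
  rw [MvPolynomial.coeff_rename_mapDomain _ σ.injective, MvPolynomial.coeff_neg, coeff_homPart,
    coeff_homPart, Finsupp.degree_mapDomain]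
  have h := MvPowerSeries.coeff_embDomain_rename σ.toEmbedding f e
  rw [Finsupp.embDomain_eq_mapDomain] at h
  change MvPowerSeries.coeff (Finsupp.mapDomain σ e) (MvPowerSeries.rename σ f) = _ at h
  rw [hf, map_neg] at h
  split_ifs
  · exact h.symm
  · simp

theorem degree_expo (σ : Equiv.Perm (Fin 5)) : (expo σ).degree = 10 := by
  rw [Finsupp.degree_eq_sum]
  simp only [expo_apply]
  rw [Equiv.sum_comp σ fun i : Fin 5 => (i : ℕ)]
  rfl

theorem coeff_Vand_mul (g : R) (e : Fin 5 →₀ ℕ) :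
    MvPowerSeries.coeff e (Vand * g) = ∑ σ : Equiv.Perm (Fin 5),
      if expo σ ≤ e then ((Equiv.Perm.sign σ : ℤ) : ℚ) * MvPowerSeries.coeff (e - expo σ) g
      else 0 := by
  rw [Vand_eq_sum, Finset.sum_mul, map_sum]
  simp only [MvPowerSeries.coeff_monomial_mul]

theorem exists_eq_Vand_mul {f : R}
    (hf : ∀ i j : Fin 5, i ≠ j → MvPowerSeries.rename (Equiv.swap i j) f = -f) :
    ∃ g : R, f = Vand * g := by
  have h : ∀ m, (∏ q ∈ pairs, (MvPolynomial.X q.1 - MvPolynomial.X q.2)) ∣ homPart m f :=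
    fun m => prod_pairs_dvd_of_rename_swap_eq_neg fun i j hij => rename_homPart m (hf i j hij)
  choose g hg using h
  obtain ⟨G, hG⟩ : ∃ G : R, ∀ e, MvPowerSeries.coeff e G = (g (e.degree + 10)).coeff e :=
    ⟨fun e => (g (e.degree + 10)).coeff e, fun _ => rfl⟩
  refine ⟨G, ?_⟩
  ext e
  have hV : MvPowerSeries.coeff e f = MvPowerSeries.coeff e (Vand * (g e.degree : R)) := by
    have hcoe : (homPart e.degree f : R) = Vand * (g e.degree : R) := by
      rw [hg, MvPolynomial.coe_mul, Vand]
      congr 1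
      rw [← MvPolynomial.coeToMvPowerSeries.ringHom_apply, map_prod]
      simp only [map_sub, MvPolynomial.coeToMvPowerSeries.ringHom_apply, MvPolynomial.coe_X]
    rw [← hcoe, MvPolynomial.coeff_coe, coeff_homPart, if_pos rfl]
  rw [hV, coeff_Vand_mul, coeff_Vand_mul]
  refine Finset.sum_congr rfl fun σ _ => ?_
  split_ifs with hle
  · congr 1
    have hdeg : (e - expo σ).degree + 10 = e.degree := by
      rw [← degree_expo σ, ← map_add, tsub_add_cancel_of_le hle]
    rw [MvPolynomial.coeff_coe, hG, hdeg]
  · rfl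

theorem rename_inv (σ : Equiv.Perm (Fin 5)) {f : R} (hf : MvPowerSeries.constantCoeff f ≠ 0) :
    MvPowerSeries.rename σ f⁻¹ = (MvPowerSeries.rename σ f)⁻¹ := by
  have h : MvPowerSeries.constantCoeff (MvPowerSeries.rename σ f) ≠ 0 := by
    rwa [MvPowerSeries.constantCoeff_rename]
  rw [MvPowerSeries.eq_inv_iff_mul_eq_one h, ← map_mul, MvPowerSeries.inv_mul_cancel _ hf, map_one]

theorem rename_Cc (σ : Equiv.Perm (Fin 5)) (a : ℚ) : MvPowerSeries.rename σ (Cc a) = Cc a :=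
  MvPowerSeries.rename_C σ a

theorem prod_pairs_sub_comp {S : Type*} [CommRing S] (σ : Equiv.Perm (Fin 5)) (y : Fin 5 → S) :
    ∏ p ∈ pairs, (y (σ p.1) - y (σ p.2)) =
      ((Equiv.Perm.sign σ : ℤ) : S) * ∏ p ∈ pairs, (y p.1 - y p.2) := by
  rw [prod_pairs_sub (fun i => y (σ i)), prod_pairs_sub, Finset.mul_sum]
  refine Fintype.sum_equiv (Equiv.mulRight σ⁻¹) _ _ fun τ => ?_
  have hs : Equiv.Perm.sign σ * Equiv.Perm.sign (τ * σ⁻¹) = Equiv.Perm.sign τ := by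
    rw [Equiv.Perm.sign_mul, Equiv.Perm.sign_inv, mul_left_comm, Int.units_mul_self, mul_one]
  rw [Equiv.coe_mulRight, ← mul_assoc, ← Int.cast_mul, ← Units.val_mul, hs,
    ← Equiv.prod_comp σ fun i => y i ^ ((τ * σ⁻¹) i : ℕ)]
  simp

theorem prod_map_ws {S : Type*} [CommMonoid S] (g : (Fin 5 → ℕ) → S) :
    (ws.map g).prod = (∏ s, g (Function.update 1 s 0)) * (g 1 * g 2) := by
  have h : ws = [Function.update (1 : Fin 5 → ℕ) 0 0, Function.update 1 1 0, Function.update 1 2 0,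
      Function.update 1 3 0, Function.update 1 4 0, 1, 2] := by
    decide
  simp [h, Fin.prod_univ_five, mul_assoc]

theorem prod_map_ws_comp {S : Type*} [CommMonoid S] (σ : Equiv.Perm (Fin 5))
    (g : (Fin 5 → ℕ) → S) : (ws.map fun w => g (w ∘ σ)).prod = (ws.map g).prod := by
  rw [prod_map_ws, prod_map_ws, ← Equiv.prod_comp σ]
  simp only [Function.update_comp_equiv, Equiv.symm_apply_apply]
  rfl

theorem rename_T (σ : Equiv.Perm (Fin 5)) (d : Fin 5 → ℕ) :
    MvPowerSeries.rename σ (T (d ∘ σ)) = ((Equiv.Perm.sign σ : ℤ) : R) * T d := by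
  have hV : MvPowerSeries.rename σ (∏ p ∈ pairs, (MvPowerSeries.X p.1 - MvPowerSeries.X p.2 +
        Cc (((d ∘ σ) p.1 : ℚ) - ((d ∘ σ) p.2 : ℚ)))) =
      ((Equiv.Perm.sign σ : ℤ) : R) * ∏ p ∈ pairs, (MvPowerSeries.X p.1 - MvPowerSeries.X p.2 +
        Cc ((d p.1 : ℚ) - (d p.2 : ℚ))) := by
    have hsub : ∀ i j : Fin 5, (MvPowerSeries.X i - MvPowerSeries.X j +
        Cc ((d i : ℚ) - (d j : ℚ)) : R) =
        (MvPowerSeries.X i + Cc (d i)) - (MvPowerSeries.X j + Cc (d j)) := fun i j => by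
      simp only [Cc, map_sub]
      ring
    simp only [map_prod, map_add, map_sub, MvPowerSeries.rename_X, rename_Cc, Function.comp_apply,
      hsub]
    exact prod_pairs_sub_comp σ fun i => MvPowerSeries.X i + Cc (d i)
  have hw : MvPowerSeries.rename σ (ws.map fun w =>
        ∏ m ∈ Finset.Icc 1 (∑ j, w j * (d ∘ σ) j),
          ((∑ j, Cc ((w j : ℚ)) * MvPowerSeries.X j) + Cc (m : ℚ))).prod =
      (ws.map fun w => ∏ m ∈ Finset.Icc 1 (∑ j, w j * d j),
        ((∑ j, Cc ((w j : ℚ)) * MvPowerSeries.X j) + Cc (m : ℚ))).prod := by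
    rw [map_list_prod, List.map_map, ← prod_map_ws_comp σ]
    congr 2
    ext1 w
    simp only [Function.comp_apply, map_prod, map_add, map_sum, map_mul, rename_Cc,
      MvPowerSeries.rename_X]
    rw [Equiv.sum_comp σ fun j => w j * d j]
    have hX : ∑ j, Cc ((w j : ℚ)) * MvPowerSeries.X j =
        ∑ j, Cc ((w (σ j) : ℚ)) * (MvPowerSeries.X (σ j) : R) :=
      (Equiv.sum_comp σ fun j => Cc ((w j : ℚ)) * (MvPowerSeries.X j : R)).symm
    rw [hX]
  have hu : MvPowerSeries.rename σ
        (∏ j, ∏ m ∈ Finset.Icc 1 ((d ∘ σ) j), (MvPowerSeries.X j + Cc (m : ℚ)) ^ n)⁻¹ =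
      (∏ j, ∏ m ∈ Finset.Icc 1 (d j), (MvPowerSeries.X j + Cc (m : ℚ)) ^ n)⁻¹ := by
    rw [rename_inv]
    · simp only [map_prod, map_pow, map_add, rename_Cc, MvPowerSeries.rename_X,
        Function.comp_apply]
      rw [Equiv.prod_comp σ fun j => ∏ m ∈ Finset.Icc 1 (d j),
        ((MvPowerSeries.X j : R) + Cc (m : ℚ)) ^ n]
    · simp only [map_prod, map_pow, map_add, MvPowerSeries.constantCoeff_X, Cc,
        MvPowerSeries.constantCoeff_C, zero_add]
      refine Finset.prod_ne_zero_iff.2 fun j _ => Finset.prod_ne_zero_iff.2 fun m hm => ?_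
      exact pow_ne_zero _ (Nat.cast_ne_zero.2 (by have := (Finset.mem_Icc.1 hm).1; omega))
  rw [T, T, map_mul, map_mul, hV, hw, hu]
  ring

theorem rename_F (σ : Equiv.Perm (Fin 5)) (N : ℕ) :
    MvPowerSeries.rename σ (F N) = ((Equiv.Perm.sign σ : ℤ) : R) * F N := by
  rw [F, map_sum, Finset.mul_sum]
  refine Finset.sum_equiv (Equiv.arrowCongr σ (Equiv.refl ℕ)) (fun d => ?_) fun d _ => ?_
  · simp only [Finset.mem_filter, Fintype.mem_piFinset, Equiv.arrowCongr_apply,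
      Function.comp_apply, Equiv.coe_refl, id]
    rw [Equiv.sum_comp σ.symm d, Equiv.forall_congr_left σ]
  · rw [← rename_T]
    congr
    ext j
    simp

theorem exists_F_eq (N : ℕ) : ∃ g : R, F N = Vand * g :=
  exists_eq_Vand_mul fun i j hij => by
    rw [rename_F, Equiv.Perm.sign_swap hij]
    simp

theorem coeff_th (f : PowerSeries ℚ) (d : ℕ) :
    PowerSeries.coeff d (th f) = d * PowerSeries.coeff d f :=
  PowerSeries.coeff_mk _ _

theorem coeff_ofNat_mul (a d : ℕ) [a.AtLeastTwo] (f : PowerSeries ℚ) :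
    PowerSeries.coeff d ((ofNat(a) : PowerSeries ℚ) * f) =
      (ofNat(a) : ℚ) * PowerSeries.coeff d f := by
  rw [← map_ofNat (PowerSeries.C : ℚ →+* PowerSeries ℚ) a, PowerSeries.coeff_C_mul]

/-- The operator annihilates `f` as soon as the coefficients of `f` satisfy its recurrence. -/
theorem operator_eq_zero {f : PowerSeries ℚ} {a : ℕ → ℚ} (hf : ∀ d, PowerSeries.coeff d f = a d)
    (h₁ : a 1 = 6 * a 0)
    (h₂ : ∀ N : ℕ, ((N : ℚ) + 2) ^ 4 * a (N + 2) =
      6 * (2 * (N : ℚ) + 3) ^ 2 * (3 * ((N : ℚ) + 1) ^ 2 + 3 * ((N : ℚ) + 1) + 1) * a (N + 1) +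
        108 * ((N : ℚ) + 1) ^ 2 * (2 * (N : ℚ) + 1) * (2 * (N : ℚ) + 3) * a N) :
    th^[4] f - 6 * PowerSeries.X * ((fun g => 2 * th g + g) ((fun g => 2 * th g + g)
      (3 * th^[2] f + 3 * th f + f))) - 108 * PowerSeries.X ^ 2 * ((fun g => th g + g)
      ((fun g => th g + g) ((fun g => 2 * th g + g) ((fun g => 2 * th g + 3 * g) f)))) = 0 := by
  ext d
  simp only [Function.iterate_succ, Function.iterate_zero, Function.comp_apply, id, mul_assoc]
  rcases d with _ | _ | N
  · simp only [map_sub, coeff_ofNat_mul, PowerSeries.coeff_zero_X_mul,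
      PowerSeries.coeff_X_pow_mul', coeff_th]
    simp
  · simp only [map_sub, map_add, coeff_ofNat_mul, PowerSeries.coeff_succ_X_mul,
      PowerSeries.coeff_X_pow_mul', coeff_th, hf]
    simp [h₁]
  · simp only [map_sub, map_add, coeff_ofNat_mul, pow_two, mul_assoc,
      PowerSeries.coeff_succ_X_mul, coeff_th, hf, map_zero]
    push_cast
    linear_combination h₂ N

theorem mul_mc_recurrence (N : ℕ) {a : ℕ → ℚ}
    (ha : ∀ d, a d = d.factorial * (2 * d).factorial * mc d 0 1 2 3 4) :
    ((N : ℚ) + 2) ^ 4 * a (N + 2) =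
      6 * (2 * (N : ℚ) + 3) ^ 2 * (3 * ((N : ℚ) + 1) ^ 2 + 3 * ((N : ℚ) + 1) + 1) * a (N + 1) +
        108 * ((N : ℚ) + 1) ^ 2 * (2 * (N : ℚ) + 1) * (2 * (N : ℚ) + 3) * a N := by
  have h := mc_add_two N
  simp only [ha, show 2 * (N + 2) = 2 * N + 1 + 1 + 1 + 1 by ring,
    show 2 * (N + 1) = 2 * N + 1 + 1 by ring, Nat.factorial_succ]
  push_cast
  linear_combination (4 * ((N : ℚ) + 1) ^ 2 * (2 * N + 1) * (2 * N + 3) *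
    N.factorial * (2 * N).factorial) * h

/-- every `F_δ` is divisible by the Vandermonde `Δ`, and the series
`I₀ = Σ a_δ q^δ` with `a_δ = (F_δ/Δ)(0)` is annihilated by the stated
Picard–Fuchs operator. -/
theorem stmt_8 :
    (∀ δ : ℕ, ∃ G : R, F δ = Vand * G) ∧
    (∀ G : ℕ → R, (∀ δ : ℕ, F δ = Vand * G δ) →
      ∀ I₀ : PowerSeries ℚ,
        I₀ = PowerSeries.mk (fun δ => MvPowerSeries.constantCoeff (G δ)) →
        th^[4] I₀ - 6 * PowerSeries.X * ((fun g => 2 * th g + g) ((fun g => 2 * th g + g) (3 * th^[2] I₀ + 3 * th I₀ + I₀))) - 108 * PowerSeries.X ^ 2 * ((fun g => th g + g) ((fun g => th g + g) ((fun g => 2 * th g + g) ((fun g => 2 * th g + 3 * g) (I₀))))) = 0) := by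
  refine ⟨exists_F_eq, ?_⟩
  rintro G hG _ rfl
  have ha (d : ℕ) : MvPowerSeries.constantCoeff (G d) =
      d.factorial * (2 * d).factorial * mc d 0 1 2 3 4 := constantCoeff_of_F_eq (hG d)
  refine operator_eq_zero (fun d => PowerSeries.coeff_mk _ _) ?_ fun N => mul_mc_recurrence N ha
  simp only [ha, mc_zero_first, mc_one]
  norm_num [Nat.factorial]

end Stmt8
end
end
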